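/- (Lemma 3.1, incoming cut-off.) Let n ≥ 2 and suppose Assumption A holds. Fix σ_∞ ∈ (0,1), ν ∈ (0,μ), δ ∈ (0,1/4) and 0 < σ' < σ < σ_∞. Then there exist R₀ > 0 and C₀ > 1 such that for every R ≥ R₀ there exists a function ζ₋ ∈ S^{0,0} with values in [0,1] satisfying: supp ζ₋ ⊂ Γ₋(4δ, σ, R); ζ₋(x,ξ) = 1 for all (x,ξ) ∈ Γ₋(δ, σ', C₀R); and {p₂, ζ₋}(x,ξ) ≤ 0 for all (x,ξ) ∈ ℝ²ⁿ. -/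

import Mathlib

/-! The cut-off is written down explicitly. With `A = 1 / σ_∞`, so that `A > 1` and `A σ < 1`, let
`τ = A |x| - x · v̂(ξ)`; by Cauchy-Schwarz `(A - 1) |x| ≤ τ ≤ (A + 1) |x|`. With `χ` a smooth
monotone transition from `0` on `(-∞, 0]` to `1` on `[1, ∞)`, put

  `ζ = χ(τ / R - (A + 1)) χ((σ - β) / (σ - σ')) ∏_± χ((4 δ - (±(|ξ|² - 1) + τ ^ (-ν))) / (2 δ))`.

Support: each factor forces one of the inequalities defining `Γ₋(4δ, σ, R)` (`tsupport_zetaCut`).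
All factors equal `1` on `Γ₋(δ, σ', C₀ R)` with `C₀ = (A + 2) / (A - 1)`, as soon as
`R ^ (-ν) ≤ δ`.

Sign: `{p₂, ζ}` is the derivative of `ζ` along the Hamilton field of `p₂` (`PB_eq_fderiv`), which is
a perturbation of the free field `(v, 0)` of relative size `|x| ^ (-μ)` (`ham_bounds`,
`flow_estimates`). For the free field, where `β ≤ σ`, `τ` has derivative
`|v| (A β - 1) ≤ -|v| (1 - A σ) < 0`, `β` has derivative `|v| (1 - β²) / |x| ≥ 0`, and `|ξ|²` is
constant. For large `|x|` the perturbation keeps the first two signs, the second one in the range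
`σ' ≤ β ≤ σ`, outside which the factor in `β` is locally constant. The derivative of `|ξ|²` is
`O(|x| ^ (-μ - 1))`; as `ν < μ`, it is dominated by the derivative of `τ ^ (-ν)`, which is at least a
positive multiple of `|x| ^ (-ν - 1)` (`sign_conditions`). Hence every factor of
`ζ` is nonnegative and nonincreasing along the field (`decAt_cut`).

Symbol class: `β` is homogeneous of degree `0` and `τ` of degree `1` in `x`, so for large `c` the
dilate `ζ(c x, ξ)` depends on `c` only through the parameter `s = c ^ (-ν) ∈ [0, 1]`, smoothly.
Compactness of `[0, 1]`, of the sphere in `x` and of the shell in `ξ` gives the estimates of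
`S^{0,0}` (`symClass_of_scaling`). -/

open MeasureTheory Filter Topology

noncomputable section

/-- Euclidean norm of `x ∈ ℝⁿ`. -/
def nrm {n : ℕ} (x : Fin n → ℝ) : ℝ := Real.sqrt (∑ j, x j ^ 2)

/-- Japanese bracket `⟨x⟩ = (1 + |x|²)^{1/2}`. -/
def jap {n : ℕ} (x : Fin n → ℝ) : ℝ := Real.sqrt (1 + ∑ j, x j ^ 2)

/-- Japanese bracket of a real number. -/
def japR (t : ℝ) : ℝ := Real.sqrt (1 + t ^ 2)

/-- Euclidean inner product on `ℝⁿ`. -/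
def dotp {n : ℕ} (x y : Fin n → ℝ) : ℝ := ∑ j, x j * y j

/-- Partial derivative in the `j`-th coordinate direction. -/
def pd {n : ℕ} {F : Type} [NormedAddCommGroup F] [NormedSpace ℝ F]
    (j : Fin n) (f : (Fin n → ℝ) → F) (x : Fin n → ℝ) : F :=
  fderiv ℝ f x (Pi.single j 1)

/-- Iterated partial derivatives along a list of coordinate indices
(encoding a multi-index). -/
def pdL {n : ℕ} {F : Type} [NormedAddCommGroup F] [NormedSpace ℝ F] :
    List (Fin n) → ((Fin n → ℝ) → F) → (Fin n → ℝ) → F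
  | [], f => f
  | j :: L, f => pd j (pdL L f)

/-- `D_j = -i ∂_j`. -/
def Dop {n : ℕ} (j : Fin n) (φ : (Fin n → ℝ) → ℂ) (x : Fin n → ℝ) : ℂ :=
  -Complex.I * pd j φ x

/-- The Klein-Gordon type operator
`Pφ = Σ_{j,k} D_j(g^{jk} D_k φ) + (1/2) Σ_j (D_j(u_j φ) + u_j D_j φ) + u_0 φ`. -/
def Pop {n : ℕ} (g : Fin n → Fin n → (Fin n → ℝ) → ℝ)
    (u : Fin (n + 1) → (Fin n → ℝ) → ℝ) (φ : (Fin n → ℝ) → ℂ) (x : Fin n → ℝ) : ℂ :=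
  (∑ j, ∑ k, Dop j (fun y => (g j k y : ℂ) * Dop k φ y) x)
    + (1 / 2) * (∑ j, (Dop j (fun y => (u j.succ y : ℂ) * φ y) x
        + (u j.succ x : ℂ) * Dop j φ x))
    + (u 0 x : ℂ) * φ x

/-- The principal symbol `p₂(x,ξ) = Σ g^{jk}(x) ξ_j ξ_k`. -/
def p2 {n : ℕ} (g : Fin n → Fin n → (Fin n → ℝ) → ℝ) (x ξ : Fin n → ℝ) : ℝ :=
  ∑ j, ∑ k, g j k x * ξ j * ξ k

/-- `v(ξ) = ∂_ξ p₀(ξ) = 2 g₀ ξ` for the constant cometric `g₀`. -/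
def vv {n : ℕ} (g₀ : Fin n → Fin n → ℝ) (ξ : Fin n → ℝ) : Fin n → ℝ :=
  fun j => 2 * ∑ k, g₀ j k * ξ k

/-- `v̂(ξ) = v(ξ)/|v(ξ)|`. -/
def vhat {n : ℕ} (g₀ : Fin n → Fin n → ℝ) (ξ : Fin n → ℝ) : Fin n → ℝ :=
  (nrm (vv g₀ ξ))⁻¹ • vv g₀ ξ

/-- `β(x,ξ) = x̂ · v̂(ξ)`. -/
def betaF {n : ℕ} (g₀ : Fin n → Fin n → ℝ) (x ξ : Fin n → ℝ) : ℝ :=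
  dotp ((nrm x)⁻¹ • x) (vhat g₀ ξ)

/-- `x^⊥_ξ = x − (x·v̂(ξ)) v̂(ξ)`. -/
def perpx {n : ℕ} (g₀ : Fin n → Fin n → ℝ) (x ξ : Fin n → ℝ) : Fin n → ℝ :=
  x - dotp x (vhat g₀ ξ) • vhat g₀ ξ

/-- `τ(x,ξ) = c₀ √(|x|² − (x·v̂(ξ))²) − x·v̂(ξ)`. -/
def tauF {n : ℕ} (g₀ : Fin n → Fin n → ℝ) (c₀ : ℝ) (x ξ : Fin n → ℝ) : ℝ :=
  c₀ * Real.sqrt (nrm x ^ 2 - dotp x (vhat g₀ ξ) ^ 2) - dotp x (vhat g₀ ξ)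

/-- Partial derivative of a symbol in the `j`-th `x`-direction. -/
def pdx {n : ℕ} (j : Fin n) (a : (Fin n → ℝ) → (Fin n → ℝ) → ℝ) :
    (Fin n → ℝ) → (Fin n → ℝ) → ℝ :=
  fun x ξ => fderiv ℝ (fun y => a y ξ) x (Pi.single j 1)

/-- Partial derivative of a symbol in the `j`-th `ξ`-direction. -/
def pdxi {n : ℕ} (j : Fin n) (a : (Fin n → ℝ) → (Fin n → ℝ) → ℝ) :
    (Fin n → ℝ) → (Fin n → ℝ) → ℝ :=
  fun x ξ => fderiv ℝ (fun ζ => a x ζ) ξ (Pi.single j 1)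

/-- Iterated `x`-derivatives of a symbol. -/
def pdxL {n : ℕ} : List (Fin n) → ((Fin n → ℝ) → (Fin n → ℝ) → ℝ) →
    (Fin n → ℝ) → (Fin n → ℝ) → ℝ
  | [], a => a
  | j :: L, a => pdx j (pdxL L a)

/-- Iterated `ξ`-derivatives of a symbol. -/
def pdxiL {n : ℕ} : List (Fin n) → ((Fin n → ℝ) → (Fin n → ℝ) → ℝ) →
    (Fin n → ℝ) → (Fin n → ℝ) → ℝ
  | [], a => a
  | j :: L, a => pdxi j (pdxiL L a)

/-- Poisson bracket `{a,b} = ∂_ξ a · ∂_x b − ∂_x a · ∂_ξ b`. -/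
def PB {n : ℕ} (a b : (Fin n → ℝ) → (Fin n → ℝ) → ℝ) :
    (Fin n → ℝ) → (Fin n → ℝ) → ℝ :=
  fun x ξ => ∑ j, (pdxi j a x ξ * pdx j b x ξ - pdx j a x ξ * pdxi j b x ξ)

/-- The symbol class `S^{k,ℓ} = S(⟨x⟩^ℓ⟨ξ⟩^k, dx²/⟨x⟩² + dξ²/⟨ξ⟩²)`. -/
def SymClass {n : ℕ} (k ℓ : ℝ) (a : (Fin n → ℝ) → (Fin n → ℝ) → ℝ) : Prop :=
  ContDiff ℝ (⊤ : ℕ∞) (fun p : (Fin n → ℝ) × (Fin n → ℝ) => a p.1 p.2) ∧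
  ∀ Lx Lξ : List (Fin n), ∃ C > 0, ∀ x ξ,
    |pdxL Lx (pdxiL Lξ a) x ξ| ≤
      C * jap x ^ (ℓ - (Lx.length : ℝ)) * jap ξ ^ (k - (Lξ.length : ℝ))

/-- The incoming region `Γ₋(δ,σ,R)`. -/
def Gm {n : ℕ} (g₀ : Fin n → Fin n → ℝ) (δ σ R : ℝ) :
    Set ((Fin n → ℝ) × (Fin n → ℝ)) :=
  {p | 1 - δ ≤ nrm p.2 ^ 2 ∧ nrm p.2 ^ 2 ≤ 1 + δ ∧ betaF g₀ p.1 p.2 ≤ σ ∧ R ≤ nrm p.1}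

/-- The outgoing region `Γ₊(δ,σ,R)`. -/
def Gp {n : ℕ} (g₀ : Fin n → Fin n → ℝ) (δ σ R : ℝ) :
    Set ((Fin n → ℝ) × (Fin n → ℝ)) :=
  {p | 1 - δ ≤ nrm p.2 ^ 2 ∧ nrm p.2 ^ 2 ≤ 1 + δ ∧ σ ≤ betaF g₀ p.1 p.2 ∧ R ≤ nrm p.1}

/-- Assumption A for the top-order coefficients `g^{jk}`: smooth, real-valued,
symmetric, everywhere nondegenerate, asymptotically flat with rate `⟨x⟩^{-μ-|α|}`
towards a constant nondegenerate symmetric matrix `g₀`. -/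
structure AssumpG {n : ℕ} (g : Fin n → Fin n → (Fin n → ℝ) → ℝ)
    (g₀ : Fin n → Fin n → ℝ) (μ : ℝ) : Prop where
  smooth : ∀ j k, ContDiff ℝ (⊤ : ℕ∞) (g j k)
  symm : ∀ j k x, g j k x = g k j x
  nondeg : ∀ x (ξ : Fin n → ℝ), (∀ j, ∑ k, g j k x * ξ k = 0) → ξ = 0
  symm0 : ∀ j k, g₀ j k = g₀ k j
  nondeg0 : ∀ ξ : Fin n → ℝ, (∀ j, ∑ k, g₀ j k * ξ k = 0) → ξ = 0
  decay : ∀ L : List (Fin n), ∃ C > 0, ∀ j k x,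
    |pdL L (fun y => g j k y - g₀ j k) x| ≤ C * jap x ^ (-μ - (L.length : ℝ))

/-- Assumption A for the lower-order coefficients `u_j`, `j = 0,…,n`:
smooth, real-valued, with symbol-type decay `⟨x⟩^{-μ-|α|}`. -/
structure AssumpU {n : ℕ} (u : Fin (n + 1) → (Fin n → ℝ) → ℝ) (μ : ℝ) : Prop where
  smooth : ∀ j, ContDiff ℝ (⊤ : ℕ∞) (u j)
  decay : ∀ L : List (Fin n), ∃ C > 0, ∀ j x,
    |pdL L (u j) x| ≤ C * jap x ^ (-μ - (L.length : ℝ))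

/-- `∂_ξ p₂(x,ξ)` (the `x`-component of the Hamilton vector field). -/
def HamX {n : ℕ} (g : Fin n → Fin n → (Fin n → ℝ) → ℝ) (x ξ : Fin n → ℝ) :
    Fin n → ℝ :=
  fun j => fderiv ℝ (fun ζ => p2 g x ζ) ξ (Pi.single j 1)

/-- `−∂_x p₂(x,ξ)` (the `ξ`-component of the Hamilton vector field). -/
def HamXi {n : ℕ} (g : Fin n → Fin n → (Fin n → ℝ) → ℝ) (x ξ : Fin n → ℝ) :
    Fin n → ℝ :=
  fun j => -(fderiv ℝ (fun y => p2 g y ξ) x (Pi.single j 1))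

/-- Assumption B (null non-trapping): every null bicharacteristic with `ξ₀ ≠ 0`
is global and escapes to spatial infinity in both time directions. -/
def AssumptionB {n : ℕ} (g : Fin n → Fin n → (Fin n → ℝ) → ℝ) : Prop :=
  ∀ x₀ ξ₀ : Fin n → ℝ, p2 g x₀ ξ₀ = 0 → ξ₀ ≠ 0 →
    ∃ y η : ℝ → (Fin n → ℝ), y 0 = x₀ ∧ η 0 = ξ₀ ∧
      (∀ t, HasDerivAt y (HamX g (y t) (η t)) t) ∧
      (∀ t, HasDerivAt η (HamXi g (y t) (η t)) t) ∧
      Tendsto (fun t => nrm (y t)) atTop atTop ∧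
      Tendsto (fun t => nrm (y t)) atBot atTop

/-- A test function: smooth and compactly supported. -/
def IsTest {n : ℕ} (φ : (Fin n → ℝ) → ℂ) : Prop :=
  ContDiff ℝ (⊤ : ℕ∞) φ ∧ HasCompactSupport φ

end

open scoped ContDiff

/-! ### Symbol estimates by dilation -/

lemma pdx_contDiffOn {n : ℕ} {U : Set (ℝ × (Fin n → ℝ) × (Fin n → ℝ))} (hU : IsOpen U)
    (F : ℝ → (Fin n → ℝ) → (Fin n → ℝ) → ℝ) (j : Fin n)
    (hF : ContDiffOn ℝ ∞ (fun q : ℝ × (Fin n → ℝ) × (Fin n → ℝ) => F q.1 q.2.1 q.2.2) U) :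
    ContDiffOn ℝ ∞ (fun q : ℝ × (Fin n → ℝ) × (Fin n → ℝ) => pdx j (F q.1) q.2.1 q.2.2) U := by
  have h1 := (hF.fderiv_of_isOpen hU (m := ∞) (by simp)).clm_apply
    (contDiffOn_const (c := ((0 : ℝ), (Pi.single j (1 : ℝ) : Fin n → ℝ), (0 : Fin n → ℝ))))
  refine h1.congr ?_
  rintro ⟨s, x, ξ⟩ hq
  have hd := ((hF.contDiffAt (hU.mem_nhds hq)).differentiableAt (by simp)).hasFDerivAt
  have hl : HasFDerivAt (fun y : Fin n → ℝ => (s, y, ξ))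
      ((0 : (Fin n → ℝ) →L[ℝ] ℝ).prod ((ContinuousLinearMap.id ℝ (Fin n → ℝ)).prod 0)) x :=
    (hasFDerivAt_const s x).prodMk ((hasFDerivAt_id x).prodMk (hasFDerivAt_const ξ x))
  have := (HasFDerivAt.comp x (f := fun y : Fin n → ℝ => (s, y, ξ)) hd hl).fderiv
  simp only [pdx]
  change fderiv ℝ ((fun q : ℝ × (Fin n → ℝ) × (Fin n → ℝ) => F q.1 q.2.1 q.2.2) ∘
    (fun y : Fin n → ℝ => (s, y, ξ))) x _ = _
  rw [this]
  simp

lemma pdxi_contDiffOn {n : ℕ} {U : Set (ℝ × (Fin n → ℝ) × (Fin n → ℝ))} (hU : IsOpen U)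
    (F : ℝ → (Fin n → ℝ) → (Fin n → ℝ) → ℝ) (j : Fin n)
    (hF : ContDiffOn ℝ ∞ (fun q : ℝ × (Fin n → ℝ) × (Fin n → ℝ) => F q.1 q.2.1 q.2.2) U) :
    ContDiffOn ℝ ∞ (fun q : ℝ × (Fin n → ℝ) × (Fin n → ℝ) => pdxi j (F q.1) q.2.1 q.2.2) U := by
  have h1 := (hF.fderiv_of_isOpen hU (m := ∞) (by simp)).clm_apply
    (contDiffOn_const (c := ((0 : ℝ), (0 : Fin n → ℝ), (Pi.single j (1 : ℝ) : Fin n → ℝ))))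
  refine h1.congr ?_
  rintro ⟨s, x, ξ⟩ hq
  have hd := ((hF.contDiffAt (hU.mem_nhds hq)).differentiableAt (by simp)).hasFDerivAt
  have hl : HasFDerivAt (fun y : Fin n → ℝ => (s, x, y))
      ((0 : (Fin n → ℝ) →L[ℝ] ℝ).prod
        ((0 : (Fin n → ℝ) →L[ℝ] (Fin n → ℝ)).prod (ContinuousLinearMap.id ℝ (Fin n → ℝ)))) ξ :=
    (hasFDerivAt_const s ξ).prodMk ((hasFDerivAt_const x ξ).prodMk (hasFDerivAt_id ξ))
  have := (HasFDerivAt.comp ξ (f := fun y : Fin n → ℝ => (s, x, y)) hd hl).fderiv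
  simp only [pdxi]
  change fderiv ℝ ((fun q : ℝ × (Fin n → ℝ) × (Fin n → ℝ) => F q.1 q.2.1 q.2.2) ∘
    (fun y : Fin n → ℝ => (s, x, y))) ξ _ = _
  rw [this]
  simp

lemma pdL_contDiffOn {n : ℕ} {U : Set (ℝ × (Fin n → ℝ) × (Fin n → ℝ))} (hU : IsOpen U)
    (F : ℝ → (Fin n → ℝ) → (Fin n → ℝ) → ℝ) (Lx Lξ : List (Fin n))
    (hF : ContDiffOn ℝ ∞ (fun q : ℝ × (Fin n → ℝ) × (Fin n → ℝ) => F q.1 q.2.1 q.2.2) U) :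
    ContDiffOn ℝ ∞ (fun q : ℝ × (Fin n → ℝ) × (Fin n → ℝ) =>
      pdxL Lx (pdxiL Lξ (F q.1)) q.2.1 q.2.2) U := by
  induction Lx with
  | cons j L ih => exact pdx_contDiffOn hU (fun s => pdxL L (pdxiL Lξ (F s))) j ih
  | nil =>
    induction Lξ with
    | nil => exact hF
    | cons j L ih => exact pdxi_contDiffOn hU (fun s => pdxiL L (F s)) j ih

/-- Iterated partial derivatives are local: they agree on an open set where the symbols do. -/
lemma pdL_congr {n : ℕ} {O : Set ((Fin n → ℝ) × (Fin n → ℝ))} (hO : IsOpen O)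
    (a b : (Fin n → ℝ) → (Fin n → ℝ) → ℝ) (Lx Lξ : List (Fin n))
    (hab : ∀ x ξ, (x, ξ) ∈ O → a x ξ = b x ξ) :
    ∀ x ξ, (x, ξ) ∈ O → pdxL Lx (pdxiL Lξ a) x ξ = pdxL Lx (pdxiL Lξ b) x ξ := by
  induction Lx with
  | cons j L ih =>
    intro x ξ h
    have : (fun y => pdxL L (pdxiL Lξ a) y ξ) =ᶠ[𝓝 x] (fun y => pdxL L (pdxiL Lξ b) y ξ) := by
      have hc : Continuous fun y : Fin n → ℝ => (y, ξ) := by fun_prop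
      filter_upwards [hc.continuousAt.preimage_mem_nhds (hO.mem_nhds h)] with y hy
      exact ih y ξ hy
    simp only [pdxL, pdx, this.fderiv_eq]
  | nil =>
    induction Lξ with
    | nil => exact hab
    | cons j L ih =>
      intro x ξ h
      have : (fun y => pdxiL L a x y) =ᶠ[𝓝 ξ] (fun y => pdxiL L b x y) := by
        have hc : Continuous fun y : Fin n → ℝ => (x, y) := by fun_prop
        filter_upwards [hc.continuousAt.preimage_mem_nhds (hO.mem_nhds h)] with y hy
        exact ih x y hy
      simp only [pdxL, pdxiL, pdxi, this.fderiv_eq]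

lemma pdxiL_scale {n : ℕ} (a : (Fin n → ℝ) → (Fin n → ℝ) → ℝ) (c : ℝ) (L : List (Fin n)) :
    pdxiL L (fun x ξ => a (c • x) ξ) = fun x ξ => pdxiL L a (c • x) ξ := by
  induction L with
  | nil => rfl
  | cons j L ih => simp only [pdxiL, ih]; rfl

lemma pdxL_scale {n : ℕ} (a : (Fin n → ℝ) → (Fin n → ℝ) → ℝ) (c : ℝ) (L : List (Fin n)) :
    pdxL L (fun x ξ => a (c • x) ξ) = fun x ξ => c ^ L.length * pdxL L a (c • x) ξ := by
  induction L with
  | nil => simp [pdxL]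
  | cons j L ih =>
    simp only [pdxL, ih]
    funext x ξ
    have h := fderiv_comp_smul (𝕜 := ℝ) (f := fun y => pdxL L a y ξ) (x := x) c
    simp only [pdx, List.length_cons, pow_succ]
    have h2 := fderiv_const_smul_field (𝕜 := ℝ) (c ^ L.length) (f := fun y => pdxL L a (c • y) ξ)
    have h3 : (fun y => c ^ L.length * pdxL L a (c • y) ξ)
      = c ^ L.length • (fun y => pdxL L a (c • y) ξ) := by ext; simp
    rw [h3, h2, Pi.smul_apply, h]
    simp [mul_assoc]

lemma pdL_zero {n : ℕ} (Lx Lξ : List (Fin n)) :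
    pdxL Lx (pdxiL Lξ (fun _ _ : Fin n → ℝ => (0 : ℝ))) = fun _ _ => 0 := by
  have h0 : pdxiL Lξ (fun _ _ : Fin n → ℝ => (0 : ℝ)) = fun _ _ => 0 := by
    induction Lξ with
    | nil => rfl
    | cons j L ih => simp only [pdxiL, ih]; funext x ξ; simp [pdxi]
  rw [h0]
  induction Lx with
  | nil => rfl
  | cons j L ih => simp only [pdxL, ih]; funext x ξ; simp [pdx]

lemma jap_pos {n : ℕ} (x : Fin n → ℝ) : 0 < jap x :=
  Real.sqrt_pos.2 (by positivity)

lemma jap_continuous {n : ℕ} : Continuous (jap : (Fin n → ℝ) → ℝ) := by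
  unfold jap; fun_prop

lemma jap_le {n : ℕ} (x : Fin n → ℝ) (hx : 1 ≤ ‖x‖) : jap x ≤ (1 + n) * ‖x‖ := by
  unfold jap
  refine Real.sqrt_le_iff.2 ⟨by positivity, ?_⟩
  have h1 : ∑ j, x j ^ 2 ≤ n * ‖x‖ ^ 2 := by
    calc ∑ j, x j ^ 2 ≤ ∑ _j : Fin n, ‖x‖ ^ 2 := by
          refine Finset.sum_le_sum fun j _ => ?_
          rw [← sq_abs (x j)]
          exact pow_le_pow_left₀ (abs_nonneg _) (by simpa using norm_le_pi_norm x j) 2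
      _ = n * ‖x‖ ^ 2 := by simp
  have hn : (0 : ℝ) ≤ n := Nat.cast_nonneg n
  nlinarith [mul_nonneg hn (sq_nonneg ‖x‖), mul_nonneg (mul_nonneg hn hn) (sq_nonneg ‖x‖)]

/-- The dilation criterion for `S^{0,0}`. If `a` vanishes for `ξ` outside a compact set `K ∌ 0` and
its dilates `a (c x, ξ)` are, for large `c`, given by a function `G` jointly smooth in the parameter
`s = c ^ (-ν)` and in `(x, ξ)`, then the symbol estimates at `y = c x`, `‖x‖ = 1`, are the bounds for
the derivatives of `G` on the compact set `[0, 1] × sphere × K`. The unit sphere of the sup norm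
serves as well as the Euclidean one. -/
theorem symClass_of_scaling {n : ℕ} (a : (Fin n → ℝ) → (Fin n → ℝ) → ℝ)
    (G : ℝ → (Fin n → ℝ) → (Fin n → ℝ) → ℝ) (K : Set (Fin n → ℝ)) (hK : IsCompact K)
    (h0K : (0 : Fin n → ℝ) ∉ K) (Λ ν : ℝ) (hΛ : 1 ≤ Λ) (hν : 0 < ν)
    (ha : ContDiff ℝ ∞ (fun p : (Fin n → ℝ) × (Fin n → ℝ) => a p.1 p.2))
    (haK : ∀ x ξ, ξ ∉ K → a x ξ = 0)
    (hG : ContDiffOn ℝ ∞ (fun q : ℝ × (Fin n → ℝ) × (Fin n → ℝ) => G q.1 q.2.1 q.2.2)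
      {q | q.2.1 ≠ 0 ∧ q.2.2 ≠ 0})
    (haG : ∀ c ≥ Λ, ∀ x ξ, 1 / 2 < ‖x‖ → a (c • x) ξ = G (c ^ (-ν)) x ξ) :
    SymClass 0 0 a := by
  refine ⟨ha, fun Lx Lξ => ?_⟩
  have hU : IsOpen {q : ℝ × (Fin n → ℝ) × (Fin n → ℝ) | q.2.1 ≠ 0 ∧ q.2.2 ≠ 0} :=
    (isOpen_ne_fun (by fun_prop) (by fun_prop)).inter (isOpen_ne_fun (by fun_prop) (by fun_prop))
  have hGc := (pdL_contDiffOn hU G Lx Lξ hG).continuousOn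
  have hac : Continuous (fun p : (Fin n → ℝ) × (Fin n → ℝ) => pdxL Lx (pdxiL Lξ a) p.1 p.2) := by
    have h1 := (pdL_contDiffOn isOpen_univ (fun _ => a) Lx Lξ
      (ContDiff.contDiffOn (ha.comp contDiff_snd))).continuousOn
    rw [continuousOn_univ] at h1
    exact h1.comp (f := fun p : (Fin n → ℝ) × (Fin n → ℝ) => ((0 : ℝ), p)) (by fun_prop)
  obtain ⟨M, hM⟩ := ((isCompact_Icc (a := (0 : ℝ)) (b := 1)).prod
    ((isCompact_sphere (0 : Fin n → ℝ) 1).prod hK)).exists_bound_of_continuousOn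
    (hGc.mono (by
      rintro ⟨s, x, ξ⟩ ⟨_, hx, hξ⟩
      refine ⟨?_, fun h => h0K (by simpa [← h] using hξ)⟩
      rintro (rfl : x = 0)
      simp at hx))
  obtain ⟨M', hM'⟩ := ((isCompact_closedBall (0 : Fin n → ℝ) Λ).prod hK).exists_bound_of_continuousOn
    hac.continuousOn
  obtain ⟨J, hJ⟩ := ((isCompact_closedBall (0 : Fin n → ℝ) Λ)).exists_bound_of_continuousOn
    (jap_continuous.pow Lx.length).continuousOn
  obtain ⟨J', hJ'⟩ := hK.exists_bound_of_continuousOn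
    (jap_continuous.pow Lξ.length).continuousOn
  have hconv : ∀ (y : Fin n → ℝ) (m : ℕ), jap y ^ ((0 : ℝ) - (m : ℝ)) = (jap y ^ m)⁻¹ := by
    intro y m
    rw [zero_sub, Real.rpow_neg (jap_pos y).le, Real.rpow_natCast]
  set C : ℝ := (|M| * (1 + n) ^ Lx.length + |M'| * |J| + 1) * (|J'| + 1) with hC
  have hCp : 0 < C := by positivity
  refine ⟨C, hCp, fun y ξ => ?_⟩
  rw [hconv, hconv, ← div_eq_mul_inv, ← div_eq_mul_inv,
    le_div_iff₀ (pow_pos (jap_pos _) _), le_div_iff₀ (pow_pos (jap_pos _) _)]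
  by_cases hξ : ξ ∈ K
  swap
  · have hO : IsOpen {p : (Fin n → ℝ) × (Fin n → ℝ) | p.2 ∉ K} :=
      (hK.isClosed.isOpen_compl).preimage continuous_snd
    have := pdL_congr hO a (fun _ _ => 0) Lx Lξ (fun x ξ h => haK x ξ h) y ξ hξ
    rw [this, pdL_zero]
    simpa using hCp.le
  have hjξ : jap ξ ^ Lξ.length ≤ |J'| + 1 := by
    have := hJ' ξ hξ
    have h2 := le_abs_self J'
    simp only [Real.norm_eq_abs, Pi.pow_apply] at this
    linarith [le_abs_self (jap ξ ^ Lξ.length)]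
  have key : |pdxL Lx (pdxiL Lξ a) y ξ| * jap y ^ Lx.length ≤
      |M| * (1 + n) ^ Lx.length + |M'| * |J| + 1 := by
    rcases le_total ‖y‖ Λ with hy | hy
    · have h1 := hM' (y, ξ) ⟨by simpa using hy, hξ⟩
      have h2 := hJ y (by simpa using hy)
      simp only [Real.norm_eq_abs] at h1 h2
      have h3 : |pdxL Lx (pdxiL Lξ a) y ξ| * jap y ^ Lx.length ≤ |M'| * |J| := by
        refine mul_le_mul (h1.trans (le_abs_self _)) ?_ (pow_nonneg (jap_pos _).le _) (abs_nonneg _)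
        exact (le_abs_self _).trans (h2.trans (le_abs_self _))
      have : 0 ≤ |M| * (1 + (n : ℝ)) ^ Lx.length := by positivity
      linarith
    · have hy1 : 1 ≤ ‖y‖ := hΛ.trans hy
      have hy0 : 0 < ‖y‖ := by linarith
      set x := ‖y‖⁻¹ • y with hx
      have hxn : ‖x‖ = 1 := by
        rw [hx, norm_smul, norm_inv, norm_norm, inv_mul_cancel₀ hy0.ne']
      have hyx : ‖y‖ • x = y := by rw [hx, smul_smul, mul_inv_cancel₀ hy0.ne', one_smul]
      have hO : IsOpen {p : (Fin n → ℝ) × (Fin n → ℝ) | 1 / 2 < ‖p.1‖} :=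
        isOpen_lt (by fun_prop) (by fun_prop)
      have h1 := pdL_congr hO (fun x ξ => a (‖y‖ • x) ξ) (G (‖y‖ ^ (-ν))) Lx Lξ
        (fun x ξ h => haG _ hy x ξ h) x ξ (by simp [hxn]; norm_num)
      rw [pdxiL_scale, pdxL_scale] at h1
      simp only [hyx] at h1
      have h2 := hM (‖y‖ ^ (-ν), x, ξ) ⟨⟨by positivity,
        Real.rpow_le_one_of_one_le_of_nonpos hy1 (by linarith)⟩, by simpa using hxn, hξ⟩
      simp only [Real.norm_eq_abs] at h2
      rw [← h1, abs_mul, abs_pow, abs_of_pos hy0] at h2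
      have h3 : jap y ^ Lx.length ≤ (1 + n) ^ Lx.length * ‖y‖ ^ Lx.length := by
        rw [← mul_pow]
        exact pow_le_pow_left₀ (jap_pos _).le (jap_le y hy1) _
      calc |pdxL Lx (pdxiL Lξ a) y ξ| * jap y ^ Lx.length
          ≤ |pdxL Lx (pdxiL Lξ a) y ξ| * ((1 + n) ^ Lx.length * ‖y‖ ^ Lx.length) := by gcongr
        _ = (‖y‖ ^ Lx.length * |pdxL Lx (pdxiL Lξ a) y ξ|) * (1 + n) ^ Lx.length := by ring
        _ ≤ |M| * (1 + n) ^ Lx.length := by gcongr; exact h2.trans (le_abs_self _)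
        _ ≤ _ := by have : 0 ≤ |M'| * |J| := by positivity
                    linarith
  calc |pdxL Lx (pdxiL Lξ a) y ξ| * jap ξ ^ Lξ.length * jap y ^ Lx.length
      = (|pdxL Lx (pdxiL Lξ a) y ξ| * jap y ^ Lx.length) * jap ξ ^ Lξ.length := by ring
    _ ≤ C := by
      rw [hC]
      exact mul_le_mul key hjξ (pow_nonneg (jap_pos _).le _) (by positivity)

/-! ### Euclidean norm and the free velocity -/

lemma sum_sq_nonneg {n : ℕ} (x : Fin n → ℝ) : 0 ≤ ∑ j, x j ^ 2 :=
  Finset.sum_nonneg fun _ _ => sq_nonneg _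

lemma nrm_nonneg {n : ℕ} (x : Fin n → ℝ) : 0 ≤ nrm x := Real.sqrt_nonneg _

lemma nrm_sq {n : ℕ} (x : Fin n → ℝ) : nrm x ^ 2 = ∑ j, x j ^ 2 :=
  Real.sq_sqrt (sum_sq_nonneg x)

lemma nrm_sq' {n : ℕ} (x : Fin n → ℝ) : nrm x ^ 2 = dotp x x := by
  rw [nrm_sq, dotp]; simp only [sq]

lemma abs_le_nrm {n : ℕ} (x : Fin n → ℝ) (j : Fin n) : |x j| ≤ nrm x := by
  refine Real.abs_le_sqrt ?_
  exact Finset.single_le_sum (f := fun j => x j ^ 2) (fun _ _ => sq_nonneg _) (Finset.mem_univ j)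

lemma norm_le_nrm {n : ℕ} (x : Fin n → ℝ) : ‖x‖ ≤ nrm x :=
  (pi_norm_le_iff_of_nonneg (nrm_nonneg x)).2 fun j => by simpa using abs_le_nrm x j

lemma nrm_pos {n : ℕ} {x : Fin n → ℝ} (hx : x ≠ 0) : 0 < nrm x :=
  (norm_pos_iff.2 hx).trans_le (norm_le_nrm x)

lemma nrm_zero {n : ℕ} : nrm (0 : Fin n → ℝ) = 0 := by simp [nrm]

lemma ne_zero_of_nrm_pos {n : ℕ} {x : Fin n → ℝ} (hx : 0 < nrm x) : x ≠ 0 := by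
  rintro rfl
  simp [nrm_zero] at hx

lemma nrm_continuous {n : ℕ} : Continuous (nrm : (Fin n → ℝ) → ℝ) := by
  unfold nrm; fun_prop

lemma nrm_le_jap {n : ℕ} (x : Fin n → ℝ) : nrm x ≤ jap x :=
  Real.sqrt_le_sqrt (by linarith)

lemma nrm_smul {n : ℕ} {c : ℝ} (hc : 0 ≤ c) (x : Fin n → ℝ) : nrm (c • x) = c * nrm x := by
  unfold nrm
  have : ∑ j, (c • x) j ^ 2 = c ^ 2 * ∑ j, x j ^ 2 := by
    rw [Finset.mul_sum]; exact Finset.sum_congr rfl fun j _ => by simp [mul_pow]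
  rw [this, Real.sqrt_mul (sq_nonneg c), Real.sqrt_sq hc]

lemma dotp_smul_left {n : ℕ} (c : ℝ) (x y : Fin n → ℝ) : dotp (c • x) y = c * dotp x y := by
  simp [dotp, Finset.mul_sum, mul_assoc]

lemma dotp_smul_right {n : ℕ} (c : ℝ) (x y : Fin n → ℝ) : dotp x (c • y) = c * dotp x y := by
  simp only [dotp, Finset.mul_sum, Pi.smul_apply, smul_eq_mul]
  exact Finset.sum_congr rfl fun j _ => by ring

lemma dotp_comm {n : ℕ} (x y : Fin n → ℝ) : dotp x y = dotp y x := by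
  simp [dotp, mul_comm]

lemma dotp_add_left {n : ℕ} (x y z : Fin n → ℝ) : dotp (x + y) z = dotp x z + dotp y z := by
  simp [dotp, Finset.sum_add_distrib, add_mul]

lemma abs_dotp_le {n : ℕ} (x y : Fin n → ℝ) : |dotp x y| ≤ nrm x * nrm y := by
  refine abs_le_of_sq_le_sq ?_ (mul_nonneg (nrm_nonneg _) (nrm_nonneg _))
  rw [mul_pow, nrm_sq, nrm_sq]
  exact Finset.sum_mul_sq_le_sq_mul_sq _ _ _

lemma nrm_le_of_abs_le {n : ℕ} (x : Fin n → ℝ) (B : ℝ) (h : ∀ j, |x j| ≤ B) :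
    nrm x ≤ n * |B| := by
  refine Real.sqrt_le_iff.2 ⟨by positivity, ?_⟩
  rcases Nat.eq_zero_or_pos n with rfl | hn
  · simp
  have h1 : ∑ j, x j ^ 2 ≤ n * |B| ^ 2 := by
    calc ∑ j, x j ^ 2 ≤ ∑ _j : Fin n, |B| ^ 2 := by
          refine Finset.sum_le_sum fun j _ => ?_
          rw [← sq_abs (x j)]
          exact pow_le_pow_left₀ (abs_nonneg _) ((h j).trans (le_abs_self _)) 2
      _ = n * |B| ^ 2 := by simp
  have hn : (1 : ℝ) ≤ n := by exact_mod_cast hn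
  refine h1.trans ?_
  rw [mul_pow]
  gcongr
  nlinarith

lemma contDiffAt_nrm {n : ℕ} {x : Fin n → ℝ} (hx : x ≠ 0) : ContDiffAt ℝ ∞ nrm x := by
  have h := nrm_pos hx
  unfold nrm
  refine ContDiffAt.sqrt (by fun_prop) ?_
  exact (Real.sqrt_pos.1 h).ne'

lemma contDiffAt_nrm_comp {n : ℕ} {E : Type*} [NormedAddCommGroup E] [NormedSpace ℝ E]
    {f : E → Fin n → ℝ} {p : E} (hf : ContDiffAt ℝ ∞ f p) (hp : f p ≠ 0) :
    ContDiffAt ℝ ∞ (fun q => nrm (f q)) p :=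
  ContDiffAt.comp (g := nrm) p (contDiffAt_nrm hp) hf

lemma hasDerivAt_nrm_line {n : ℕ} {x : Fin n → ℝ} (hx : x ≠ 0) (X : Fin n → ℝ) :
    HasDerivAt (fun t : ℝ => nrm (x + t • X)) (dotp x X / nrm x) 0 := by
  have h1 : HasDerivAt (fun t : ℝ => ∑ j, (x + t • X) j ^ 2) (2 * dotp x X) 0 := by
    have : ∀ j ∈ (Finset.univ : Finset (Fin n)),
        HasDerivAt (fun t : ℝ => (x + t • X) j ^ 2) (2 * (x j * X j)) 0 := by
      intro j _
      have h := (((hasDerivAt_id (0 : ℝ)).mul_const (X j)).const_add (x j)).fun_pow 2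
      simpa [mul_assoc] using h
    simpa [dotp, Finset.mul_sum] using HasDerivAt.fun_sum this
  have h2 := h1.sqrt (by simpa using (Real.sqrt_pos.1 (nrm_pos hx)).ne')
  simp only [zero_smul, add_zero] at h2
  rw [mul_div_mul_left _ _ two_ne_zero] at h2
  exact h2

lemma hasDerivAt_nrm_sq_line {n : ℕ} (x X : Fin n → ℝ) :
    HasDerivAt (fun t : ℝ => nrm (x + t • X) ^ 2) (2 * dotp x X) 0 := by
  have : ∀ j ∈ (Finset.univ : Finset (Fin n)),
      HasDerivAt (fun t : ℝ => (x + t • X) j ^ 2) (2 * (x j * X j)) 0 := by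
    intro j _
    have h := (((hasDerivAt_id (0 : ℝ)).mul_const (X j)).const_add (x j)).fun_pow 2
    simpa [mul_assoc] using h
  simp only [nrm_sq]
  simpa [dotp, Finset.mul_sum] using HasDerivAt.fun_sum this

lemma hasDerivAt_dotp_line {n : ℕ} (x X v u : Fin n → ℝ) :
    HasDerivAt (fun t : ℝ => dotp (x + t • X) (v + t • u)) (dotp X v + dotp x u) 0 := by
  have : ∀ j ∈ (Finset.univ : Finset (Fin n)),
      HasDerivAt (fun t : ℝ => (x + t • X) j * (v + t • u) j) (X j * v j + x j * u j) 0 := by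
    intro j _
    have h := (((hasDerivAt_id (0 : ℝ)).mul_const (X j)).const_add (x j)).fun_mul
      (((hasDerivAt_id (0 : ℝ)).mul_const (u j)).const_add (v j))
    simpa using h
  simpa [dotp, Finset.sum_add_distrib] using HasDerivAt.fun_sum this

lemma vv_line {n : ℕ} (g₀ : Fin n → Fin n → ℝ) (ξ Ξ : Fin n → ℝ) (t : ℝ) :
    vv g₀ (ξ + t • Ξ) = vv g₀ ξ + t • vv g₀ Ξ := by
  funext j
  simp only [vv, Pi.add_apply, Pi.smul_apply, smul_eq_mul, mul_add, Finset.sum_add_distrib,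
    Finset.mul_sum]
  congr 1
  exact Finset.sum_congr rfl fun k _ => by ring

lemma vv_contDiff {n : ℕ} (g₀ : Fin n → Fin n → ℝ) : ContDiff ℝ ∞ (vv g₀) := by
  unfold vv; fun_prop

lemma vv_ne_zero {n : ℕ} {g₀ : Fin n → Fin n → ℝ}
    (h : ∀ ξ : Fin n → ℝ, (∀ j, ∑ k, g₀ j k * ξ k = 0) → ξ = 0) {ξ : Fin n → ℝ} (hξ : ξ ≠ 0) :
    vv g₀ ξ ≠ 0 := by
  intro h0
  refine hξ (h ξ fun j => ?_)
  have := congrFun h0 j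
  simpa [vv] using this

/-! ### The cut-off and its smoothness -/

/-- The longitudinal component `x · v̂(ξ)`. -/
noncomputable def lonF {n : ℕ} (g₀ : Fin n → Fin n → ℝ) (x ξ : Fin n → ℝ) : ℝ :=
  dotp x (vv g₀ ξ) / nrm (vv g₀ ξ)

/-- `A |x| - x · v̂(ξ)`, which for `A > 1` is comparable to `|x|` everywhere and decreases along the
free flow where `A β(x,ξ) < 1`. -/
noncomputable def tauA {n : ℕ} (g₀ : Fin n → Fin n → ℝ) (A : ℝ) (x ξ : Fin n → ℝ) : ℝ :=
  A * nrm x - lonF g₀ x ξ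

lemma betaF_eq {n : ℕ} (g₀ : Fin n → Fin n → ℝ) (x ξ : Fin n → ℝ) :
    betaF g₀ x ξ = lonF g₀ x ξ / nrm x := by
  simp only [betaF, vhat, lonF, dotp_smul_left, dotp_smul_right, div_eq_mul_inv]
  ring

lemma abs_lonF_le {n : ℕ} (g₀ : Fin n → Fin n → ℝ) (x ξ : Fin n → ℝ) :
    |lonF g₀ x ξ| ≤ nrm x := by
  rw [lonF, abs_div, abs_of_nonneg (nrm_nonneg (vv g₀ ξ))]
  exact div_le_of_le_mul₀ (nrm_nonneg _) (nrm_nonneg _) (abs_dotp_le _ _)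

lemma le_tauA {n : ℕ} (g₀ : Fin n → Fin n → ℝ) (A : ℝ) (x ξ : Fin n → ℝ) :
    (A - 1) * nrm x ≤ tauA g₀ A x ξ := by
  have := (abs_le.1 (abs_lonF_le g₀ x ξ)).2
  unfold tauA; linarith

lemma tauA_le {n : ℕ} (g₀ : Fin n → Fin n → ℝ) (A : ℝ) (x ξ : Fin n → ℝ) :
    tauA g₀ A x ξ ≤ (A + 1) * nrm x := by
  have := (abs_le.1 (abs_lonF_le g₀ x ξ)).1
  unfold tauA; linarith

lemma lonF_smul {n : ℕ} (g₀ : Fin n → Fin n → ℝ) (c : ℝ) (x ξ : Fin n → ℝ) :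
    lonF g₀ (c • x) ξ = c * lonF g₀ x ξ := by
  rw [lonF, dotp_smul_left, lonF, mul_div_assoc]

lemma tauA_smul {n : ℕ} (g₀ : Fin n → Fin n → ℝ) (A : ℝ) {c : ℝ} (hc : 0 ≤ c)
    (x ξ : Fin n → ℝ) : tauA g₀ A (c • x) ξ = c * tauA g₀ A x ξ := by
  rw [tauA, tauA, lonF_smul, nrm_smul hc]; ring

lemma betaF_smul {n : ℕ} (g₀ : Fin n → Fin n → ℝ) {c : ℝ} (hc : 0 < c)
    (x ξ : Fin n → ℝ) : betaF g₀ (c • x) ξ = betaF g₀ x ξ := by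
  rw [betaF_eq, betaF_eq, lonF_smul, nrm_smul hc.le, mul_div_mul_left _ _ hc.ne']

/-- The angular and energy part of the cut-off.  The parameter `s` weighs the correction
`τ ^ (-ν)` in the energy cut-offs, so that dilating `x` amounts to changing `s`. -/
noncomputable def angCut {n : ℕ} (g₀ : Fin n → Fin n → ℝ) (A ν δ σ σ' s : ℝ)
    (x ξ : Fin n → ℝ) : ℝ :=
  Real.smoothTransition ((σ - betaF g₀ x ξ) / (σ - σ')) *
  (Real.smoothTransition ((4 * δ - (nrm ξ ^ 2 - 1 + s * tauA g₀ A x ξ ^ (-ν))) / (2 * δ)) *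
  Real.smoothTransition ((4 * δ - (1 - nrm ξ ^ 2 + s * tauA g₀ A x ξ ^ (-ν))) / (2 * δ)))

/-- The incoming cut-off at scale `R`. The shift `A + 1` in the radial factor makes it vanish for
`|x| ≤ R`, since `τ ≤ (A + 1) |x|`. -/
noncomputable def zetaCut {n : ℕ} (g₀ : Fin n → Fin n → ℝ) (A ν δ σ σ' R : ℝ)
    (x ξ : Fin n → ℝ) : ℝ :=
  Real.smoothTransition (tauA g₀ A x ξ / R - (A + 1)) * angCut g₀ A ν δ σ σ' 1 x ξ

lemma contDiffAt_st {E : Type*} [NormedAddCommGroup E] [NormedSpace ℝ E] {f : E → ℝ} {p : E}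
    (hf : ContDiffAt ℝ ∞ f p) : ContDiffAt ℝ ∞ (fun q => Real.smoothTransition (f q)) p :=
  (Real.smoothTransition.contDiff (n := ⊤)).contDiffAt.comp p hf

section smoothness

variable {n : ℕ} {g₀ : Fin n → Fin n → ℝ}

lemma contDiffAt_lonF (h0 : ∀ ξ : Fin n → ℝ, (∀ j, ∑ k, g₀ j k * ξ k = 0) → ξ = 0)
    (q : ℝ × (Fin n → ℝ) × (Fin n → ℝ)) (hξ : q.2.2 ≠ 0) :
    ContDiffAt ℝ ∞ (fun q : ℝ × (Fin n → ℝ) × (Fin n → ℝ) => lonF g₀ q.2.1 q.2.2) q := by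
  unfold lonF
  have hv : ContDiffAt ℝ ∞ (fun q : ℝ × (Fin n → ℝ) × (Fin n → ℝ) => vv g₀ q.2.2) q :=
    ((vv_contDiff g₀).comp (contDiff_snd.comp contDiff_snd)).contDiffAt
  refine ContDiffAt.div ?_ ?_ (nrm_pos (vv_ne_zero h0 hξ)).ne'
  · unfold dotp vv
    fun_prop
  · exact contDiffAt_nrm_comp hv (vv_ne_zero h0 hξ)

lemma contDiffAt_tauA (h0 : ∀ ξ : Fin n → ℝ, (∀ j, ∑ k, g₀ j k * ξ k = 0) → ξ = 0) (A : ℝ)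
    (q : ℝ × (Fin n → ℝ) × (Fin n → ℝ)) (hx : q.2.1 ≠ 0) (hξ : q.2.2 ≠ 0) :
    ContDiffAt ℝ ∞ (fun q : ℝ × (Fin n → ℝ) × (Fin n → ℝ) => tauA g₀ A q.2.1 q.2.2) q := by
  unfold tauA
  refine ContDiffAt.sub (contDiffAt_const.mul ?_) (contDiffAt_lonF h0 q hξ)
  exact contDiffAt_nrm_comp (f := fun q : ℝ × (Fin n → ℝ) × (Fin n → ℝ) => q.2.1) (by fun_prop) hx

lemma contDiffAt_angCut (h0 : ∀ ξ : Fin n → ℝ, (∀ j, ∑ k, g₀ j k * ξ k = 0) → ξ = 0)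
    {A : ℝ} (hA : 1 < A) (ν δ σ σ' : ℝ)
    (q : ℝ × (Fin n → ℝ) × (Fin n → ℝ)) (hx : q.2.1 ≠ 0) (hξ : q.2.2 ≠ 0) :
    ContDiffAt ℝ ∞ (fun q : ℝ × (Fin n → ℝ) × (Fin n → ℝ) =>
      angCut g₀ A ν δ σ σ' q.1 q.2.1 q.2.2) q := by
  have hn : ContDiffAt ℝ ∞ (fun q : ℝ × (Fin n → ℝ) × (Fin n → ℝ) => nrm q.2.1) q :=
    contDiffAt_nrm_comp (f := fun q : ℝ × (Fin n → ℝ) × (Fin n → ℝ) => q.2.1) (by fun_prop) hx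
  have hm : ContDiffAt ℝ ∞ (fun q : ℝ × (Fin n → ℝ) × (Fin n → ℝ) => nrm q.2.2) q :=
    contDiffAt_nrm_comp (f := fun q : ℝ × (Fin n → ℝ) × (Fin n → ℝ) => q.2.2) (by fun_prop) hξ
  have hb : ContDiffAt ℝ ∞ (fun q : ℝ × (Fin n → ℝ) × (Fin n → ℝ) => betaF g₀ q.2.1 q.2.2) q := by
    simp only [betaF_eq]
    exact (contDiffAt_lonF h0 q hξ).div hn (nrm_pos hx).ne'
  have ht : ContDiffAt ℝ ∞ (fun q : ℝ × (Fin n → ℝ) × (Fin n → ℝ) =>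
      q.1 * tauA g₀ A q.2.1 q.2.2 ^ (-ν)) q := by
    refine contDiffAt_fst.mul ((contDiffAt_tauA h0 A q hx hξ).rpow_const_of_ne ?_)
    have := le_tauA g₀ A q.2.1 q.2.2
    have h2 := mul_pos (sub_pos.2 hA) (nrm_pos hx)
    exact (h2.trans_le this).ne'
  unfold angCut
  refine (contDiffAt_st ((contDiffAt_const.sub hb).div_const _)).mul ((contDiffAt_st ?_).mul
    (contDiffAt_st ?_))
  · exact (contDiffAt_const.sub (((hm.pow 2).sub contDiffAt_const).add ht)).div_const _
  · exact (contDiffAt_const.sub ((contDiffAt_const.sub (hm.pow 2)).add ht)).div_const _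

lemma contDiffAt_zetaCut (h0 : ∀ ξ : Fin n → ℝ, (∀ j, ∑ k, g₀ j k * ξ k = 0) → ξ = 0)
    {A : ℝ} (hA : 1 < A) (ν δ σ σ' R : ℝ)
    (p : (Fin n → ℝ) × (Fin n → ℝ)) (hx : p.1 ≠ 0) (hξ : p.2 ≠ 0) :
    ContDiffAt ℝ ∞ (fun p : (Fin n → ℝ) × (Fin n → ℝ) =>
      zetaCut g₀ A ν δ σ σ' R p.1 p.2) p := by
  have hi : ContDiffAt ℝ ∞ (fun p : (Fin n → ℝ) × (Fin n → ℝ) => ((1 : ℝ), p)) p := by fun_prop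
  have h1 := (contDiffAt_angCut h0 hA ν δ σ σ' (1, p) hx hξ).comp p hi
  have h2 := (contDiffAt_tauA h0 A (1, p) hx hξ).comp p hi
  exact (contDiffAt_st ((h2.div_const R).sub contDiffAt_const)).mul h1

end smoothness

/-! ### The Hamilton field -/

/-- The Poisson bracket with `p₂` is the derivative along the Hamilton vector field. -/
lemma PB_eq_fderiv {n : ℕ} (g : Fin n → Fin n → (Fin n → ℝ) → ℝ)
    (b : (Fin n → ℝ) → (Fin n → ℝ) → ℝ) (x ξ : Fin n → ℝ)
    (hb : DifferentiableAt ℝ (fun p : (Fin n → ℝ) × (Fin n → ℝ) => b p.1 p.2) (x, ξ)) :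
    PB (p2 g) b x ξ =
      fderiv ℝ (fun p : (Fin n → ℝ) × (Fin n → ℝ) => b p.1 p.2) (x, ξ)
        (HamX g x ξ, HamXi g x ξ) := by
  set D := fderiv ℝ (fun p : (Fin n → ℝ) × (Fin n → ℝ) => b p.1 p.2) (x, ξ) with hD
  have h1 : ∀ j, pdx j b x ξ = D (Pi.single j 1, 0) := by
    intro j
    have hl : HasFDerivAt (fun y : Fin n → ℝ => (y, ξ))
        ((ContinuousLinearMap.id ℝ (Fin n → ℝ)).prod 0) x :=
      (hasFDerivAt_id x).prodMk (hasFDerivAt_const ξ x)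
    have := (HasFDerivAt.comp x (f := fun y : Fin n → ℝ => (y, ξ)) hb.hasFDerivAt hl).fderiv
    simp only [pdx]
    change fderiv ℝ ((fun p : (Fin n → ℝ) × (Fin n → ℝ) => b p.1 p.2) ∘ (fun y => (y, ξ))) x _ = _
    rw [this]
    simp [hD]
  have h2 : ∀ j, pdxi j b x ξ = D (0, Pi.single j 1) := by
    intro j
    have hl : HasFDerivAt (fun y : Fin n → ℝ => (x, y))
        ((0 : (Fin n → ℝ) →L[ℝ] (Fin n → ℝ)).prod (ContinuousLinearMap.id ℝ (Fin n → ℝ))) ξ :=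
      (hasFDerivAt_const x ξ).prodMk (hasFDerivAt_id ξ)
    have := (HasFDerivAt.comp ξ (f := fun y : Fin n → ℝ => (x, y)) hb.hasFDerivAt hl).fderiv
    simp only [pdxi]
    change fderiv ℝ ((fun p : (Fin n → ℝ) × (Fin n → ℝ) => b p.1 p.2) ∘ (fun y => (x, y))) ξ _ = _
    rw [this]
    simp [hD]
  have h3 : ((HamX g x ξ, HamXi g x ξ) : (Fin n → ℝ) × (Fin n → ℝ)) =
      ∑ j, (HamX g x ξ j • ((Pi.single j 1, 0) : (Fin n → ℝ) × (Fin n → ℝ)) +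
        HamXi g x ξ j • ((0, Pi.single j 1) : (Fin n → ℝ) × (Fin n → ℝ))) := by
    ext i <;> simp [Prod.fst_sum, Prod.snd_sum, Finset.sum_apply, Pi.single_apply]
  rw [h3, map_sum]
  refine Finset.sum_congr rfl fun j _ => ?_
  rw [map_add, map_smul, map_smul, ← h1, ← h2]
  simp only [HamX, HamXi, pdxi, pdx, smul_eq_mul]
  ring

lemma HamX_eq {n : ℕ} (g : Fin n → Fin n → (Fin n → ℝ) → ℝ)
    (hs : ∀ j k x, g j k x = g k j x) (x ξ : Fin n → ℝ) (i : Fin n) :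
    HamX g x ξ i = 2 * ∑ k, g i k x * ξ k := by
  have hd : DifferentiableAt ℝ (fun ζ => p2 g x ζ) ξ := by unfold p2; fun_prop
  set e : Fin n → ℝ := Pi.single i 1 with he
  have hline : HasDerivAt (fun t : ℝ => ξ + t • e) e 0 := by
    simpa using ((hasDerivAt_id (0 : ℝ)).smul_const e).const_add ξ
  have h1 : HasDerivAt (fun t : ℝ => p2 g x (ξ + t • e)) (HamX g x ξ i) 0 := by
    have hd' : HasFDerivAt (fun ζ => p2 g x ζ) (fderiv ℝ (fun ζ => p2 g x ζ) ξ)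
      (ξ + (0 : ℝ) • e) := by simpa using hd.hasFDerivAt
    exact HasFDerivAt.comp_hasDerivAt (f := fun t : ℝ => ξ + t • e) 0 hd' hline
  have h2 : HasDerivAt (fun t : ℝ => p2 g x (ξ + t • e))
      (∑ j, ∑ k, (g j k x * e j * ξ k + g j k x * ξ j * e k)) 0 := by
    unfold p2
    refine HasDerivAt.fun_sum fun j _ => HasDerivAt.fun_sum fun k _ => ?_
    have h := ((((hasDerivAt_id (0 : ℝ)).mul_const (e j)).const_add (ξ j)).const_mul
      (g j k x)).fun_mul (((hasDerivAt_id (0 : ℝ)).mul_const (e k)).const_add (ξ k))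
    simpa using h
  rw [h1.unique h2]
  simp only [Finset.sum_add_distrib, he, Pi.single_apply]
  simp only [mul_ite, mul_one, mul_zero, ite_mul, zero_mul, Finset.sum_ite_eq',
    Finset.mem_univ, if_true]
  rw [Finset.sum_comm]
  simp only [Finset.sum_ite_eq', Finset.mem_univ, if_true]
  rw [two_mul]
  congr 1
  exact Finset.sum_congr rfl fun k _ => by rw [hs k i]

lemma HamXi_eq {n : ℕ} (g : Fin n → Fin n → (Fin n → ℝ) → ℝ) (g₀ : Fin n → Fin n → ℝ)
    (hs : ∀ j k, ContDiff ℝ (⊤ : ℕ∞) (g j k)) (x ξ : Fin n → ℝ) (i : Fin n) :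
    HamXi g x ξ i = -∑ j, ∑ k, pdL [i] (fun y => g j k y - g₀ j k) x * ξ j * ξ k := by
  have hd : ∀ j k, HasFDerivAt (g j k) (fderiv ℝ (g j k) x) x := fun j k =>
    ((hs j k).differentiable (by simp) x).hasFDerivAt
  have h1 : HasFDerivAt (fun y => p2 g y ξ)
      (∑ j, ∑ k, ξ k • ξ j • fderiv ℝ (g j k) x) x := by
    unfold p2
    exact HasFDerivAt.fun_sum fun j _ => HasFDerivAt.fun_sum fun k _ =>
      ((hd j k).mul_const (ξ j)).mul_const (ξ k)
  simp only [HamXi, h1.fderiv, pdL, pd, fderiv_sub_const, sum_apply,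
    smul_apply, smul_eq_mul]
  congr 1
  exact Finset.sum_congr rfl fun j _ => Finset.sum_congr rfl fun k _ => by ring

/-- The Hamilton vector field of `p₂` is an `O(|x|^{-μ}), O(|x|^{-1-μ})` perturbation of the free
one. -/
lemma ham_bounds {n : ℕ} {g : Fin n → Fin n → (Fin n → ℝ) → ℝ} {g₀ : Fin n → Fin n → ℝ}
    {μ : ℝ} (hμ : 0 < μ) (hg : AssumpG g g₀ μ) :
    ∃ C > 0, ∀ x ξ : Fin n → ℝ, 0 < nrm x → nrm ξ ≤ 2 →
      nrm (HamX g x ξ - vv g₀ ξ) ≤ C * nrm x ^ (-μ) ∧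
      nrm (HamXi g x ξ) ≤ C * nrm x ^ (-μ - 1) ∧
      nrm (vv g₀ (HamXi g x ξ)) ≤ C * nrm x ^ (-μ - 1) := by
  obtain ⟨C0, hC0, h0⟩ := hg.decay []
  have hdec : ∀ i : Fin n, ∃ C > 0, ∀ j k x,
      |pdL [i] (fun y => g j k y - g₀ j k) x| ≤ C * jap x ^ (-μ - 1) := by
    intro i
    obtain ⟨C, hC, h⟩ := hg.decay [i]
    exact ⟨C, hC, by simpa using h⟩
  choose C1 hC1 h1 using hdec
  set D := ∑ i, C1 i with hD
  have hD0 : 0 ≤ D := Finset.sum_nonneg fun i _ => (hC1 i).le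
  have hC1D : ∀ i, C1 i ≤ D := fun i =>
    Finset.single_le_sum (f := C1) (fun i _ => (hC1 i).le) (Finset.mem_univ i)
  set M := ∑ j, ∑ k, |g₀ j k| with hM
  have hM0 : 0 ≤ M := Finset.sum_nonneg fun i _ => Finset.sum_nonneg fun _ _ => abs_nonneg _
  have hgM : ∀ j k, |g₀ j k| ≤ M := fun j k =>
    (Finset.single_le_sum (f := fun k => |g₀ j k|) (fun _ _ => abs_nonneg _)
      (Finset.mem_univ k)).trans
    (Finset.single_le_sum (f := fun j => ∑ k, |g₀ j k|)
      (fun _ _ => Finset.sum_nonneg fun _ _ => abs_nonneg _) (Finset.mem_univ j))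
  set E := n * (2 * (n * (C0 * 2))) with hE
  set F := n * (n * (n * (D * 2 * 2))) with hF
  have hE0 : (0 : ℝ) ≤ E := by positivity
  have hF0 : (0 : ℝ) ≤ F := by positivity
  have hH0 : (0 : ℝ) ≤ n * (2 * (n * (M * F))) := by positivity
  refine ⟨E + F + n * (2 * (n * (M * F))) + 1, by positivity, fun x ξ hx hξ => ?_⟩
  have hp : ∀ a : ℝ, a ≤ 0 → jap x ^ a ≤ nrm x ^ a := fun a ha =>
    Real.rpow_le_rpow_of_nonpos hx (nrm_le_jap x) ha
  set m := nrm x ^ (-μ) with hm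
  set m' := nrm x ^ (-μ - 1) with hm'
  have hm0 : 0 ≤ m := Real.rpow_nonneg hx.le _
  have hm'0 : 0 ≤ m' := Real.rpow_nonneg hx.le _
  have hξj : ∀ j, |ξ j| ≤ 2 := fun j => (abs_le_nrm ξ j).trans hξ
  have b1 : nrm (HamX g x ξ - vv g₀ ξ) ≤ E * m := by
    refine (nrm_le_of_abs_le _ (2 * (n * (C0 * 2)) * m) fun j => ?_).trans ?_
    · have : (HamX g x ξ - vv g₀ ξ) j = 2 * ∑ k, (g j k x - g₀ j k) * ξ k := by
        simp only [Pi.sub_apply, HamX_eq g hg.symm, vv, sub_mul, Finset.sum_sub_distrib]; ring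
      rw [this, abs_mul, abs_two]
      have : |∑ k, (g j k x - g₀ j k) * ξ k| ≤ ∑ _k : Fin n, (C0 * m) * 2 := by
        refine (Finset.abs_sum_le_sum_abs _ _).trans (Finset.sum_le_sum fun k _ => ?_)
        rw [abs_mul]
        refine mul_le_mul ?_ (hξj k) (abs_nonneg _) (by positivity)
        have h := h0 j k x
        simp only [pdL, List.length_nil, Nat.cast_zero, sub_zero] at h
        exact h.trans (mul_le_mul_of_nonneg_left (hp _ (by linarith)) hC0.le)
      simp only [Finset.sum_const, Finset.card_univ, Fintype.card_fin, nsmul_eq_mul] at this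
      linarith
    · rw [abs_of_nonneg (by positivity), hE]; exact le_of_eq (by ring)
  have b2' : ∀ i, |HamXi g x ξ i| ≤ (n * (n * (D * 2 * 2))) * m' := by
    intro i
    rw [HamXi_eq g g₀ hg.smooth, abs_neg]
    have : |∑ j, ∑ k, pdL [i] (fun y => g j k y - g₀ j k) x * ξ j * ξ k| ≤
        ∑ _j : Fin n, ∑ _k : Fin n, (D * m') * 2 * 2 := by
      refine (Finset.abs_sum_le_sum_abs _ _).trans (Finset.sum_le_sum fun j _ => ?_)
      refine (Finset.abs_sum_le_sum_abs _ _).trans (Finset.sum_le_sum fun k _ => ?_)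
      rw [abs_mul, abs_mul]
      refine mul_le_mul (mul_le_mul ?_ (hξj j) (abs_nonneg _) (by positivity)) (hξj k)
        (abs_nonneg _) (by positivity)
      exact (h1 i j k x).trans (mul_le_mul (hC1D i) (hp _ (by linarith))
        (Real.rpow_nonneg (jap_pos x).le _) hD0)
    simp only [Finset.sum_const, Finset.card_univ, Fintype.card_fin, nsmul_eq_mul] at this
    linarith
  have b2 : nrm (HamXi g x ξ) ≤ F * m' := by
    refine (nrm_le_of_abs_le _ _ b2').trans ?_
    rw [abs_of_nonneg (by positivity), hF]; exact le_of_eq (by ring)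
  have b3 : nrm (vv g₀ (HamXi g x ξ)) ≤ n * (2 * (n * (M * F))) * m' := by
    refine (nrm_le_of_abs_le _ (2 * (n * (M * F)) * m') fun j => ?_).trans ?_
    · simp only [vv]
      rw [abs_mul, abs_two]
      have : |∑ k, g₀ j k * HamXi g x ξ k| ≤ ∑ _k : Fin n, M * (F * m') := by
        refine (Finset.abs_sum_le_sum_abs _ _).trans (Finset.sum_le_sum fun k _ => ?_)
        rw [abs_mul]
        exact mul_le_mul (hgM j k) ((abs_le_nrm _ k).trans b2) (abs_nonneg _) hM0
      simp only [Finset.sum_const, Finset.card_univ, Fintype.card_fin, nsmul_eq_mul] at this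
      linarith
    · rw [abs_of_nonneg (by positivity)]; exact le_of_eq (by ring)
  refine ⟨b1.trans ?_, b2.trans ?_, b3.trans ?_⟩ <;> gcongr <;> linarith

/-! ### The sign of the derivative along the Hamilton field -/

/-- `f` is nonnegative at `0` and has a nonpositive derivative there. -/
def DecAt (f : ℝ → ℝ) : Prop := 0 ≤ f 0 ∧ ∃ f' ≤ 0, HasDerivAt f f' 0

lemma DecAt.mul {f h : ℝ → ℝ} (hf : DecAt f) (hh : DecAt h) : DecAt (fun t => f t * h t) := by
  obtain ⟨f0, f', hf', hfd⟩ := hf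
  obtain ⟨h0, h', hh', hhd⟩ := hh
  refine ⟨mul_nonneg f0 h0, _, ?_, hfd.fun_mul hhd⟩
  have := mul_nonneg (neg_nonneg.2 hf') h0
  have := mul_nonneg f0 (neg_nonneg.2 hh')
  linarith

/-- A smooth transition of `f` is nonincreasing at `0` if `f` is, and also where it is locally equal
to `1`. -/
lemma decAt_st {f : ℝ → ℝ} {f' : ℝ} (hf : HasDerivAt f f' 0) (h : f' ≤ 0 ∨ 1 < f 0) :
    DecAt (fun t => Real.smoothTransition (f t)) := by
  refine ⟨Real.smoothTransition.nonneg _, ?_⟩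
  rcases h with h | h
  · have hd : DifferentiableAt ℝ Real.smoothTransition (f 0) :=
      (Real.smoothTransition.contDiff (n := 1)).differentiable (by simp) _
    refine ⟨_, ?_, hd.hasDerivAt.comp 0 hf⟩
    exact mul_nonpos_of_nonneg_of_nonpos Real.smoothTransition.monotone.deriv_nonneg h
  · refine ⟨0, le_rfl, ?_⟩
    have : (fun t => Real.smoothTransition (f t)) =ᶠ[𝓝 0] fun _ => 1 := by
      filter_upwards [hf.continuousAt.eventually (lt_mem_nhds h)] with t ht
      exact Real.smoothTransition.one_of_one_le ht.le
    exact (hasDerivAt_const 0 1).congr_of_eventuallyEq this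

/-- The sign of the derivative of the cut-off along a curve, in terms of the radius `r`, the
longitudinal component `l` and the squared frequency `k` along it. -/
lemma decAt_cut {r l k : ℝ → ℝ} {dr dl dk A ν δ σ σ' R : ℝ} (hr : HasDerivAt r dr 0)
    (hl : HasDerivAt l dl 0) (hk : HasDerivAt k dk 0) (hr0 : 0 < r 0) (hR : 0 < R) (hδ : 0 < δ)
    (hσ : σ' < σ) (hτ0 : 0 < A * r 0 - l 0) (hτ : A * dr - dl ≤ 0)
    (hβ : l 0 / r 0 < σ' ∨ 0 ≤ dl * r 0 - l 0 * dr)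
    (hdk : |dk| ≤ -(A * dr - dl) * ν * (A * r 0 - l 0) ^ (-ν - 1)) :
    DecAt (fun t => Real.smoothTransition ((A * r t - l t) / R - (A + 1)) *
      (Real.smoothTransition ((σ - l t / r t) / (σ - σ')) *
      (Real.smoothTransition ((4 * δ - (k t - 1 + 1 * (A * r t - l t) ^ (-ν))) / (2 * δ)) *
      Real.smoothTransition ((4 * δ - (1 - k t + 1 * (A * r t - l t) ^ (-ν))) / (2 * δ))))) := by
  have hτd : HasDerivAt (fun t => A * r t - l t) (A * dr - dl) 0 := (hr.const_mul A).fun_sub hl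
  have hτν : HasDerivAt (fun t => 1 * (A * r t - l t) ^ (-ν))
      (1 * ((A * dr - dl) * (-ν) * (A * r 0 - l 0) ^ (-ν - 1))) 0 :=
    (hτd.rpow_const (Or.inl hτ0.ne')).const_mul 1
  have hdk' := abs_le.1 hdk
  have hσσ : 0 < σ - σ' := sub_pos.2 hσ
  refine (decAt_st ((hτd.div_const R).sub_const _) (Or.inl ?_)).mul
    ((decAt_st (((hl.fun_div hr hr0.ne').const_sub σ).div_const _) ?_).mul
    ((decAt_st ((((hk.sub_const 1).fun_add hτν).const_sub _).div_const _) (Or.inl ?_)).mul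
    (decAt_st ((((hk.const_sub 1).fun_add hτν).const_sub _).div_const _) (Or.inl ?_))))
  · exact div_nonpos_of_nonpos_of_nonneg hτ hR.le
  · rcases hβ with h | h
    · right
      rw [lt_div_iff₀ hσσ]
      linarith
    · left
      refine div_nonpos_of_nonpos_of_nonneg ?_ hσσ.le
      have := div_nonneg h (sq_nonneg (r 0))
      linarith
  · refine div_nonpos_of_nonpos_of_nonneg ?_ (by linarith)
    linarith [hdk'.1]
  · refine div_nonpos_of_nonpos_of_nonneg ?_ (by linarith)
    linarith [hdk'.2]

/-- Along the Hamilton field of `p₂` the radius, the longitudinal coordinate `x · v̂(ξ)` and `|ξ|²`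
change at the free rates `|v|β`, `|v|` and `0`, up to errors `O(|x|^{-μ})`, `O(|x|^{-μ})` and
`O(|x|^{-μ-1})`. -/
lemma flow_estimates {n : ℕ} {g : Fin n → Fin n → (Fin n → ℝ) → ℝ} {g₀ : Fin n → Fin n → ℝ}
    {μ : ℝ} (hμ : 0 < μ) (hg : AssumpG g g₀ μ) {c : ℝ} (hc : 0 < c) :
    ∃ C > 0, ∀ x ξ : Fin n → ℝ, 0 < nrm x → nrm ξ ≤ 2 → c ≤ nrm (vv g₀ ξ) → ∃ dr dl dk : ℝ,
      HasDerivAt (fun t : ℝ => nrm (x + t • HamX g x ξ)) dr 0 ∧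
      HasDerivAt (fun t : ℝ => lonF g₀ (x + t • HamX g x ξ) (ξ + t • HamXi g x ξ)) dl 0 ∧
      HasDerivAt (fun t : ℝ => nrm (ξ + t • HamXi g x ξ) ^ 2) dk 0 ∧
      |dr - nrm (vv g₀ ξ) * betaF g₀ x ξ| ≤ C * nrm x ^ (-μ) ∧
      |dl - nrm (vv g₀ ξ)| ≤ C * nrm x ^ (-μ) ∧
      |dk| ≤ C * nrm x ^ (-μ - 1) := by
  obtain ⟨C, hC, hb⟩ := ham_bounds hμ hg
  refine ⟨C + 2 * C / c + 4 * C, by positivity, fun x ξ hx hξ hcv => ?_⟩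
  obtain ⟨b1, b2, b3⟩ := hb x ξ hx hξ
  set X := HamX g x ξ with hX
  set Ξ := HamXi g x ξ with hΞ
  set v := vv g₀ ξ with hv
  set u := vv g₀ Ξ with hu
  set V := nrm v with hV
  set E := X - v with hE
  set ρ := nrm x with hρ
  have hV0 : 0 < V := hc.trans_le hcv
  have hv0 : v ≠ 0 := ne_zero_of_nrm_pos hV0
  have hXE : X = v + E := by rw [hE]; abel
  set m := ρ ^ (-μ) with hm
  set m' := ρ ^ (-μ - 1) with hm'
  have hmm : ρ * m' = m := by
    rw [hm', Real.rpow_sub_one hx.ne', mul_div_cancel₀ _ hx.ne']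
  have hm0 : 0 ≤ m := Real.rpow_nonneg hx.le _
  have hm'0 : 0 ≤ m' := Real.rpow_nonneg hx.le _
  have hCc : 0 ≤ 2 * C / c := by positivity
  have hlon : ∀ t : ℝ, lonF g₀ (x + t • X) (ξ + t • Ξ) =
      dotp (x + t • X) (v + t • u) / nrm (v + t • u) := by
    intro t; rw [lonF, vv_line]
  have hl := (hasDerivAt_dotp_line x X v u).fun_div (hasDerivAt_nrm_line hv0 u) (by simpa using hV0.ne')
  simp only [zero_smul, add_zero] at hl
  simp only [hlon]
  refine ⟨_, _, _, hasDerivAt_nrm_line (ne_zero_of_nrm_pos hx) X, hl, hasDerivAt_nrm_sq_line ξ Ξ,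
    ?_, ?_, ?_⟩
  · have : dotp x X / nrm x - V * betaF g₀ x ξ = dotp x E / ρ := by
      rw [betaF_eq, lonF, ← hv, ← hV, ← hρ, hXE, dotp_comm x (v + E), dotp_add_left, dotp_comm v, dotp_comm E]
      field_simp
      ring
    rw [this, abs_div, abs_of_pos hx, div_le_iff₀ hx]
    calc |dotp x E| ≤ ρ * nrm E := abs_dotp_le _ _
      _ ≤ ρ * (C * m) := by gcongr
      _ ≤ (C + 2 * C / c + 4 * C) * m * ρ := by
        have := mul_nonneg hm0 hx.le
        nlinarith [mul_nonneg hCc this, mul_nonneg hC.le this]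
  · have e1 : ((dotp X v + dotp x u) * nrm v - dotp x v * (dotp v u / nrm v)) / nrm v ^ 2 - V =
        dotp E v / V + dotp x u / V - dotp x v * dotp v u / V ^ 3 := by
      have hvv : dotp v v = V ^ 2 := (nrm_sq' v).symm
      rw [hXE, dotp_add_left, hvv, ← hV]
      field_simp
      ring
    rw [e1]
    have a1 : |dotp E v / V| ≤ C * m := by
      rw [abs_div, abs_of_pos hV0, div_le_iff₀ hV0]
      exact (abs_dotp_le _ _).trans (mul_le_mul_of_nonneg_right b1 hV0.le)
    have hxu : ρ * nrm u ≤ C * m := by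
      calc ρ * nrm u ≤ ρ * (C * m') := by gcongr
        _ = C * m := by rw [← hmm]; ring
    have a2' : ρ * nrm u / V ≤ C / c * m := by
      rw [div_mul_eq_mul_div]
      exact div_le_div₀ (by positivity) hxu hc hcv
    have a2 : |dotp x u / V| ≤ C / c * m := by
      rw [abs_div, abs_of_pos hV0]
      exact (div_le_div_of_nonneg_right (abs_dotp_le _ _) hV0.le).trans a2'
    have a3 : |dotp x v * dotp v u / V ^ 3| ≤ C / c * m := by
      rw [abs_div, abs_of_pos (pow_pos hV0 3), abs_mul]
      have : |dotp x v| * |dotp v u| ≤ (ρ * V) * (V * nrm u) :=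
        mul_le_mul (abs_dotp_le _ _) (abs_dotp_le _ _) (abs_nonneg _) (by positivity)
      refine (div_le_div_of_nonneg_right this (by positivity)).trans ?_
      refine le_trans (le_of_eq ?_) a2'
      field_simp
    have a23 : 2 * C / c = C / c + C / c := by ring
    have := abs_sub (dotp E v / V + dotp x u / V) (dotp x v * dotp v u / V ^ 3)
    have h2 := abs_add_le (dotp E v / V) (dotp x u / V)
    have h3 : 0 ≤ C * m := by positivity
    rw [a23]
    linarith
  · rw [abs_mul, abs_two]
    have h1 : |dotp ξ Ξ| ≤ 2 * (C * m') :=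
      (abs_dotp_le _ _).trans (mul_le_mul hξ b2 (nrm_nonneg _) (by norm_num))
    have h3 : 0 ≤ C * m' := by positivity
    have h4 : 0 ≤ 2 * C / c * m' := by positivity
    linarith

/-- For large `ρ = |x|` the free part of the flow dominates, and the sign conditions of `decAt_cut`
hold. -/
lemma sign_conditions {A C c κ ν μ σ σ' β V ρ τ dr dl dk : ℝ} (hA : 1 < A) (hAσ : A * σ < 1)
    (hc : 0 < c) (hκ : κ = c * (1 - A * σ) / 2) (hν : 0 < ν) (hσ' : 0 < σ') (hσ1 : σ < 1)
    (hρ : 0 < ρ) (hV : c ≤ V) (hβ : β ≤ σ) (hβ1 : |β| ≤ 1)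
    (hdr : |dr - V * β| ≤ C * ρ ^ (-μ)) (hdl : |dl - V| ≤ C * ρ ^ (-μ))
    (hdk : |dk| ≤ C * ρ ^ (-μ - 1)) (hτ0 : 0 < τ) (hτ : τ ≤ (A + 1) * ρ)
    (e1 : 2 * (C * ρ ^ (-μ)) ≤ c * (1 - σ ^ 2)) (e2 : (A + 1) * (C * ρ ^ (-μ)) ≤ κ)
    (e3 : C * ρ ^ (-(μ - ν)) ≤ κ * ν * (A + 1) ^ (-ν - 1)) :
    A * dr - dl ≤ 0 ∧ (β < σ' ∨ 0 ≤ dl - β * dr) ∧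
      |dk| ≤ -(A * dr - dl) * ν * τ ^ (-ν - 1) := by
  have hdr' := abs_le.1 hdr
  have hdl' := abs_le.1 hdl
  have hβ' := abs_le.1 hβ1
  have hκ0 : 0 < κ := by rw [hκ]; have := sub_pos.2 hAσ; positivity
  have hτd : A * dr - dl ≤ -κ := by
    have h1 : A * dr ≤ A * (V * β + C * ρ ^ (-μ)) :=
      mul_le_mul_of_nonneg_left (by linarith [hdr'.2]) (by linarith)
    have h2 : V * (1 - A * β) ≥ c * (1 - A * σ) := by
      have : A * β ≤ A * σ := mul_le_mul_of_nonneg_left hβ (by linarith)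
      exact mul_le_mul hV (by linarith) (by linarith) (by linarith)
    have h3 : c * (1 - A * σ) = 2 * κ := by rw [hκ]; ring
    have h4 : A * (V * β + C * ρ ^ (-μ)) - V = -(V * (1 - A * β)) + A * (C * ρ ^ (-μ)) := by ring
    linarith [hdl'.1]
  refine ⟨by linarith, ?_, ?_⟩
  · rcases lt_or_ge β σ' with h | h
    · exact Or.inl h
    · right
      have hβ0 : 0 ≤ β := by linarith
      have h1 : β * dr ≤ β * (V * β + C * ρ ^ (-μ)) :=
        mul_le_mul_of_nonneg_left (by linarith [hdr'.2]) hβ0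
      have hm : 0 ≤ C * ρ ^ (-μ) := (abs_nonneg _).trans hdr
      have h2 : β * (C * ρ ^ (-μ)) ≤ C * ρ ^ (-μ) := mul_le_of_le_one_left hm hβ'.2
      have hsq : β ^ 2 ≤ σ ^ 2 := pow_le_pow_left₀ hβ0 hβ 2
      have hs1 : σ ^ 2 ≤ 1 := pow_le_one₀ (by linarith) hσ1.le
      have h3 : c * (1 - σ ^ 2) ≤ V * (1 - β ^ 2) :=
        mul_le_mul hV (by linarith) (by linarith) (by linarith)
      have h4 : β * (V * β + C * ρ ^ (-μ)) = V * β ^ 2 + β * (C * ρ ^ (-μ)) := by ring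
      linarith [hdl'.1]
  · have hsplit : C * ρ ^ (-μ - 1) = C * ρ ^ (-(μ - ν)) * ρ ^ (-ν - 1) := by
      rw [mul_assoc, ← Real.rpow_add hρ]; congr 2; ring
    calc |dk| ≤ C * ρ ^ (-(μ - ν)) * ρ ^ (-ν - 1) := hsplit ▸ hdk
      _ ≤ κ * ν * (A + 1) ^ (-ν - 1) * ρ ^ (-ν - 1) :=
        mul_le_mul_of_nonneg_right e3 (Real.rpow_nonneg hρ.le _)
      _ = κ * ν * ((A + 1) * ρ) ^ (-ν - 1) := by
        rw [Real.mul_rpow (by linarith) hρ.le]; ring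
      _ ≤ κ * ν * τ ^ (-ν - 1) := by
        refine mul_le_mul_of_nonneg_left ?_ (by positivity)
        exact Real.rpow_le_rpow_of_nonpos hτ0 hτ (by linarith)
      _ ≤ -(A * dr - dl) * ν * τ ^ (-ν - 1) := by
        refine mul_le_mul_of_nonneg_right ?_ (Real.rpow_nonneg hτ0.le _)
        exact mul_le_mul_of_nonneg_right (by linarith) hν.le

/-! ### Support -/

/-- The support condition. The region `Γ₋(4δ, σ, R)` is closed because `|x| ≥ R > 0` and
`v(ξ) ≠ 0` there, so the condition on `β` may be written without division. -/
lemma tsupport_zetaCut {n : ℕ} {g₀ : Fin n → Fin n → ℝ}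
    (h0 : ∀ ξ : Fin n → ℝ, (∀ j, ∑ k, g₀ j k * ξ k = 0) → ξ = 0)
    {A ν δ σ σ' R : ℝ} (hA : 1 < A) (hδ : δ ∈ Set.Ioo (0 : ℝ) (1 / 4)) (hσ : σ' < σ)
    (hR : 0 < R) :
    tsupport (fun p : (Fin n → ℝ) × (Fin n → ℝ) => zetaCut g₀ A ν δ σ σ' R p.1 p.2) ⊆
      Gm g₀ (4 * δ) σ R := by
  set S : Set ((Fin n → ℝ) × (Fin n → ℝ)) := {p | (1 - 4 * δ ≤ nrm p.2 ^ 2 ∧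
    nrm p.2 ^ 2 ≤ 1 + 4 * δ) ∧ dotp p.1 (vv g₀ p.2) ≤ σ * nrm p.1 * nrm (vv g₀ p.2) ∧
    R ≤ nrm p.1} with hS
  have c1 : Continuous fun p : (Fin n → ℝ) × (Fin n → ℝ) => nrm p.1 :=
    nrm_continuous.comp continuous_fst
  have c2 : Continuous fun p : (Fin n → ℝ) × (Fin n → ℝ) => nrm p.2 :=
    nrm_continuous.comp continuous_snd
  have cv : Continuous fun p : (Fin n → ℝ) × (Fin n → ℝ) => vv g₀ p.2 :=
    (vv_contDiff g₀).continuous.comp continuous_snd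
  have c3 : Continuous fun p : (Fin n → ℝ) × (Fin n → ℝ) => nrm (vv g₀ p.2) :=
    nrm_continuous.comp cv
  have c4 : Continuous fun p : (Fin n → ℝ) × (Fin n → ℝ) => dotp p.1 (vv g₀ p.2) := by
    unfold dotp vv; fun_prop
  have hSc : IsClosed S := by
    have k1 : IsClosed {p : (Fin n → ℝ) × (Fin n → ℝ) | 1 - 4 * δ ≤ nrm p.2 ^ 2} :=
      isClosed_le continuous_const (c2.pow 2)
    have k2 : IsClosed {p : (Fin n → ℝ) × (Fin n → ℝ) | nrm p.2 ^ 2 ≤ 1 + 4 * δ} :=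
      isClosed_le (c2.pow 2) continuous_const
    have k3 : IsClosed {p : (Fin n → ℝ) × (Fin n → ℝ) |
        dotp p.1 (vv g₀ p.2) ≤ σ * nrm p.1 * nrm (vv g₀ p.2)} :=
      isClosed_le c4 ((continuous_const.mul c1).mul c3)
    have k4 : IsClosed {p : (Fin n → ℝ) × (Fin n → ℝ) | R ≤ nrm p.1} :=
      isClosed_le continuous_const c1
    exact (k1.inter k2).inter (k3.inter k4)
  have hne : ∀ ξ : Fin n → ℝ, 1 - 4 * δ ≤ nrm ξ ^ 2 → ξ ≠ 0 := by
    rintro ξ h rfl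
    rw [nrm_zero] at h
    linarith [hδ.2]
  have hsub : Function.support
      (fun p : (Fin n → ℝ) × (Fin n → ℝ) => zetaCut g₀ A ν δ σ σ' R p.1 p.2) ⊆ S := by
    rintro ⟨x, ξ⟩ hp
    have pos : ∀ t, Real.smoothTransition t ≠ 0 → 0 < t := fun t ht => by
      by_contra h
      exact ht (Real.smoothTransition.zero_of_nonpos (not_lt.1 h))
    simp only [Function.mem_support, zetaCut, angCut, mul_ne_zero_iff, one_mul] at hp
    obtain ⟨p1, p2, p3, p4⟩ := hp
    have q1 := pos _ p1
    have q2 := pos _ p2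
    have q3 := pos _ p3
    have q4 := pos _ p4
    have hδ0 := hδ.1
    rw [sub_pos, lt_div_iff₀ hR] at q1
    rw [div_pos_iff_of_pos_right (sub_pos.2 hσ)] at q2
    rw [div_pos_iff_of_pos_right (by linarith)] at q3 q4
    have hxR : R < nrm x := by
      have := q1.trans_le (tauA_le g₀ A x ξ)
      exact lt_of_mul_lt_mul_left this (by linarith)
    have hτν : 0 ≤ tauA g₀ A x ξ ^ (-ν) :=
      Real.rpow_nonneg ((mul_nonneg (by linarith) (nrm_nonneg x)).trans (le_tauA g₀ A x ξ)) _
    have hξ1 : 1 - 4 * δ ≤ nrm ξ ^ 2 := by linarith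
    have hv := nrm_pos (vv_ne_zero h0 (hne ξ hξ1))
    refine ⟨⟨hξ1, show nrm ξ ^ 2 ≤ _ by linarith⟩, ?_, hxR.le⟩
    rw [betaF_eq, lonF, div_div, sub_pos, div_lt_iff₀ (by have := hR.trans hxR; positivity)] at q2
    change dotp x (vv g₀ ξ) ≤ σ * nrm x * nrm (vv g₀ ξ)
    linarith
  refine (closure_minimal hsub hSc).trans ?_
  rintro ⟨x, ξ⟩ ⟨⟨h1, h2⟩, h3, h4⟩
  refine ⟨h1, h2, ?_, h4⟩
  have hx : 0 < nrm x := hR.trans_le h4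
  have hv := nrm_pos (vv_ne_zero h0 (hne ξ h1))
  rw [betaF_eq, lonF, div_div, div_le_iff₀ (by positivity)]
  change dotp x (vv g₀ ξ) ≤ σ * nrm x * nrm (vv g₀ ξ) at h3
  linarith

/-! ### The incoming cut-off -/

/-- Lemma 3.1, incoming cut-off. Under Assumption A (top
order), fix `σ_∞ ∈ (0,1)`, `ν ∈ (0,μ)`, `δ ∈ (0,1/4)` and `0 < σ' < σ < σ_∞`.
Then there are `R₀ > 0` and `C₀ > 1` such that for every `R ≥ R₀` there is
`ζ₋ ∈ S^{0,0}` with values in `[0,1]`, `supp ζ₋ ⊂ Γ₋(4δ,σ,R)`, `ζ₋ = 1` on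
`Γ₋(δ,σ',C₀R)`, and `{p₂, ζ₋} ≤ 0` everywhere. -/
theorem stmt_7 {n : ℕ} (hn : 2 ≤ n)
    (g : Fin n → Fin n → (Fin n → ℝ) → ℝ) (g₀ : Fin n → Fin n → ℝ)
    (μ : ℝ) (hμ0 : 0 < μ) (hμ1 : μ < 1) (hg : AssumpG g g₀ μ)
    (σinf ν δ σ σ' : ℝ) (hσinf : σinf ∈ Set.Ioo (0 : ℝ) 1)
    (hν : ν ∈ Set.Ioo 0 μ) (hδ : δ ∈ Set.Ioo (0 : ℝ) (1 / 4))
    (hσ'0 : 0 < σ') (hσ'σ : σ' < σ) (hσ : σ < σinf) :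
    ∃ R₀ > (0 : ℝ), ∃ C₀ > (1 : ℝ), ∀ R ≥ R₀,
      ∃ ζ : (Fin n → ℝ) → (Fin n → ℝ) → ℝ,
        SymClass 0 0 ζ ∧
        (∀ x ξ, ζ x ξ ∈ Set.Icc (0 : ℝ) 1) ∧
        tsupport (fun p : (Fin n → ℝ) × (Fin n → ℝ) => ζ p.1 p.2)
          ⊆ Gm g₀ (4 * δ) σ R ∧
        (∀ p ∈ Gm g₀ δ σ' (C₀ * R), ζ p.1 p.2 = 1) ∧
        ∀ x ξ, PB (p2 g) ζ x ξ ≤ 0 := by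
  obtain ⟨hs0, hs1⟩ := hσinf
  obtain ⟨hν0, hνμ⟩ := hν
  have h0 := hg.nondeg0
  set A := σinf⁻¹ with hA
  have hA1 : 1 < A := (one_lt_inv₀ hs0).2 hs1
  have hAσ : A * σ < 1 := by
    rw [hA, inv_mul_lt_iff₀ hs0]; linarith
  have hσ1 : σ < 1 := by linarith
  have hσ0 : 0 < σ := by linarith
  -- the energy shell, a compact set avoiding `ξ = 0`
  set K : Set (Fin n → ℝ) := {ξ | 1 - 4 * δ ≤ nrm ξ ^ 2 ∧ nrm ξ ^ 2 ≤ 1 + 4 * δ} with hK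
  have hKne : ∀ ξ ∈ K, ξ ≠ 0 := by
    rintro ξ ⟨h, -⟩ rfl
    rw [nrm_zero] at h
    linarith [hδ.2]
  have hK2 : ∀ ξ ∈ K, nrm ξ ≤ 2 := by
    rintro ξ ⟨-, h⟩
    nlinarith [hδ.2, nrm_nonneg ξ]
  have hKc : IsCompact K := by
    refine Metric.isCompact_of_isClosed_isBounded ?_ ?_
    · have k1 : IsClosed {ξ : Fin n → ℝ | 1 - 4 * δ ≤ nrm ξ ^ 2} :=
        isClosed_le continuous_const (nrm_continuous.pow 2)
      have k2 : IsClosed {ξ : Fin n → ℝ | nrm ξ ^ 2 ≤ 1 + 4 * δ} :=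
        isClosed_le (nrm_continuous.pow 2) continuous_const
      exact k1.inter k2
    · refine (Metric.isBounded_closedBall (x := (0 : Fin n → ℝ)) (r := 2)).subset fun ξ hξ => ?_
      simpa using (norm_le_nrm ξ).trans (hK2 ξ hξ)
  obtain ⟨c, hc, hcK⟩ := hKc.exists_forall_le' (f := fun ξ => nrm (vv g₀ ξ)) (a := 0)
    (nrm_continuous.comp (vv_contDiff g₀).continuous).continuousOn
    (fun ξ hξ => nrm_pos (vv_ne_zero h0 (hKne ξ hξ)))
  obtain ⟨C, hC, hflow⟩ := flow_estimates hμ0 hg hc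
  set κ := c * (1 - A * σ) / 2 with hκ
  have hκ0 : 0 < κ := by have := sub_pos.2 hAσ; positivity
  -- the radius beyond which all error terms are negligible
  have hev : ∀ᶠ ρ : ℝ in atTop, 1 ≤ ρ ∧ 2 * (C * ρ ^ (-μ)) ≤ c * (1 - σ ^ 2) ∧
      (A + 1) * (C * ρ ^ (-μ)) ≤ κ ∧
      C * ρ ^ (-(μ - ν)) ≤ κ * ν * (A + 1) ^ (-ν - 1) ∧ ρ ^ (-ν) ≤ δ := by
    have t1 := (tendsto_rpow_neg_atTop hμ0).const_mul C
    have t2 := (tendsto_rpow_neg_atTop (sub_pos.2 hνμ)).const_mul C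
    have t3 := tendsto_rpow_neg_atTop hν0
    have t4 := t1.const_mul 2
    have t5 := t1.const_mul (A + 1)
    simp only [mul_zero] at t2 t4 t5
    have hσ2 : 0 < 1 - σ ^ 2 := by nlinarith
    filter_upwards [eventually_ge_atTop 1, t4.eventually (ge_mem_nhds (mul_pos hc hσ2)),
      t5.eventually (ge_mem_nhds hκ0),
      t2.eventually (ge_mem_nhds (show 0 < κ * ν * (A + 1) ^ (-ν - 1) by positivity)),
      t3.eventually (ge_mem_nhds hδ.1)] with ρ a1 a2 a3 a4 a5
    exact ⟨a1, a2, a3, a4, a5⟩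
  obtain ⟨R₀, hR₀⟩ := eventually_atTop.1 hev
  have hAm : 0 < A - 1 := sub_pos.2 hA1
  refine ⟨max R₀ 1, by positivity, (A + 2) / (A - 1), by rw [gt_iff_lt, lt_div_iff₀ hAm]; linarith,
    fun R hR => ?_⟩
  have hRR₀ : R₀ ≤ R := (le_max_left _ _).trans hR
  have hR1 : 1 ≤ R := (le_max_right _ _).trans hR
  have hR0 : 0 < R := by linarith
  set ζ := zetaCut g₀ A ν δ σ σ' R with hζ
  have hsupp := tsupport_zetaCut h0 (ν := ν) hA1 hδ hσ'σ hR0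
  have hsm : ContDiff ℝ ∞ (fun p : (Fin n → ℝ) × (Fin n → ℝ) => ζ p.1 p.2) := by
    refine contDiff_iff_contDiffAt.2 fun p => ?_
    by_cases hp : p ∈ tsupport (fun p : (Fin n → ℝ) × (Fin n → ℝ) => ζ p.1 p.2)
    swap
    · exact (contDiffAt_const (c := (0 : ℝ))).congr_of_eventuallyEq
        (notMem_tsupport_iff_eventuallyEq.1 hp)
    have hp' := hsupp hp
    exact contDiffAt_zetaCut h0 hA1 ν δ σ σ' R p
      (ne_zero_of_nrm_pos (hR0.trans_le hp'.2.2.2)) (hKne _ ⟨hp'.1, hp'.2.1⟩)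
  refine ⟨ζ, ?_, ?_, hsupp, ?_, ?_⟩
  · refine symClass_of_scaling ζ (angCut g₀ A ν δ σ σ') K hKc (fun h => hKne _ h rfl)
      (max 1 (2 * (A + 2) * R / (A - 1))) ν (le_max_left _ _) hν0 hsm ?_ ?_ ?_
    · intro x ξ hξ
      by_contra hne
      have := hsupp (subset_tsupport _ (show (x, ξ) ∈ Function.support _ from hne))
      exact hξ ⟨this.1, this.2.1⟩
    · exact fun q hq => (contDiffAt_angCut h0 hA1 ν δ σ σ' q hq.1 hq.2).contDiffWithinAt
    · intro l hl x ξ hx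
      have hl0 : 0 < l := by linarith [(le_max_left _ _).trans hl]
      have hl1 := (le_max_right _ _).trans hl
      have hτ : (A - 1) / 2 ≤ tauA g₀ A x ξ := by
        refine le_trans ?_ (le_tauA g₀ A x ξ)
        have := mul_le_mul_of_nonneg_left (hx.le.trans (norm_le_nrm x)) hAm.le
        linarith
      have hτ0 : 0 ≤ tauA g₀ A x ξ := by linarith
      -- far out the radial cut-off equals one
      have hone : Real.smoothTransition (tauA g₀ A (l • x) ξ / R - (A + 1)) = 1 := by
        refine Real.smoothTransition.one_of_one_le ?_
        rw [tauA_smul g₀ A hl0.le, le_sub_iff_add_le, le_div_iff₀ hR0]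
        rw [div_le_iff₀ hAm] at hl1
        have := mul_le_mul_of_nonneg_left hτ hl0.le
        linarith
      rw [tauA_smul g₀ A hl0.le] at hone
      simp only [hζ, zetaCut, hone, one_mul, angCut, betaF_smul g₀ hl0, tauA_smul g₀ A hl0.le,
        Real.mul_rpow hl0.le hτ0]
  · intro x ξ
    have hn := Real.smoothTransition.nonneg
    have h1 := Real.smoothTransition.le_one
    exact unitInterval.mul_mem ⟨hn _, h1 _⟩ (unitInterval.mul_mem ⟨hn _, h1 _⟩
      (unitInterval.mul_mem ⟨hn _, h1 _⟩ ⟨hn _, h1 _⟩))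
  · rintro ⟨x, ξ⟩ ⟨h1, h2, h3, h4⟩
    simp only at h1 h2 h3 h4 ⊢
    have hτ : (A + 2) * R ≤ tauA g₀ A x ξ := by
      refine le_trans ?_ (le_tauA g₀ A x ξ)
      rw [div_mul_eq_mul_div, div_le_iff₀ hAm] at h4
      linarith
    have hτR : R ≤ tauA g₀ A x ξ := by nlinarith
    have hτν := (hR₀ _ (hRR₀.trans hτR)).2.2.2.2
    have hδ0 := hδ.1
    rw [hζ, zetaCut, angCut, Real.smoothTransition.one_of_one_le,
      Real.smoothTransition.one_of_one_le, Real.smoothTransition.one_of_one_le,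
      Real.smoothTransition.one_of_one_le]
    · norm_num
    · rw [le_div_iff₀ (by linarith)]; linarith
    · rw [le_div_iff₀ (by linarith)]; linarith
    · rw [le_div_iff₀ (by linarith)]; linarith
    · rw [le_sub_iff_add_le, le_div_iff₀ hR0]; linarith
  · intro x ξ
    rw [PB_eq_fderiv g ζ x ξ (hsm.differentiable (by simp) _)]
    by_cases hp : (x, ξ) ∈ tsupport (fun p : (Fin n → ℝ) × (Fin n → ℝ) => ζ p.1 p.2)
    swap
    · rw [fderiv_of_notMem_tsupport ℝ hp]; simp
    obtain ⟨h1, h2, h3, h4⟩ := hsupp hp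
    simp only at h1 h2 h3 h4
    have hξK : ξ ∈ K := ⟨h1, h2⟩
    have hx : 0 < nrm x := hR0.trans_le h4
    obtain ⟨dr, dl, dk, hr, hl, hk, br, bl, bk⟩ := hflow x ξ hx (hK2 ξ hξK) (hcK ξ hξK)
    obtain ⟨-, e1, e2, e3, -⟩ := hR₀ _ (hRR₀.trans h4)
    have hτ0 : 0 < tauA g₀ A x ξ := (mul_pos hAm hx).trans_le (le_tauA g₀ A x ξ)
    have hβ1 : |betaF g₀ x ξ| ≤ 1 := by
      rw [betaF_eq, abs_div, abs_of_pos hx, div_le_one hx]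
      exact abs_lonF_le g₀ x ξ
    obtain ⟨s1, s2, s3⟩ := sign_conditions hA1 hAσ hc hκ hν0 hσ'0 hσ1 hx (hcK ξ hξK) h3 hβ1
      br bl bk hτ0 (tauA_le g₀ A x ξ) e1 e2 e3
    obtain ⟨-, f', hf', hfd⟩ := decAt_cut (A := A) (ν := ν) (δ := δ) (σ := σ) (σ' := σ') (R := R)
      hr hl hk (by simpa using hx) hR0 hδ.1 hσ'σ (by simpa [tauA] using hτ0) s1
      (by
        simp only [zero_smul, add_zero, ← betaF_eq]
        refine s2.imp_right fun h => ?_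
        have h5 : lonF g₀ x ξ = betaF g₀ x ξ * nrm x := by
          rw [betaF_eq, div_mul_cancel₀ _ hx.ne']
        rw [h5]
        have := mul_nonneg h hx.le
        linarith)
      (by simpa [tauA] using s3)
    -- compare with the derivative of the cut-off along the line in the Hamilton direction
    have hline : HasDerivAt (fun t : ℝ => ((x, ξ) : (Fin n → ℝ) × (Fin n → ℝ)) +
        t • (HamX g x ξ, HamXi g x ξ)) (HamX g x ξ, HamXi g x ξ) 0 := by
      simpa using ((hasDerivAt_id (0 : ℝ)).smul_const
        ((HamX g x ξ, HamXi g x ξ) : (Fin n → ℝ) × (Fin n → ℝ))).const_add (x, ξ)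
    have hd : HasFDerivAt (fun p : (Fin n → ℝ) × (Fin n → ℝ) => ζ p.1 p.2)
        (fderiv ℝ (fun p : (Fin n → ℝ) × (Fin n → ℝ) => ζ p.1 p.2) (x, ξ))
        ((x, ξ) + (0 : ℝ) • (HamX g x ξ, HamXi g x ξ)) := by
      simpa using (hsm.differentiable (by simp) (x, ξ)).hasFDerivAt
    have hcomp := HasFDerivAt.comp_hasDerivAt (f := fun t : ℝ =>
      ((x, ξ) : (Fin n → ℝ) × (Fin n → ℝ)) + t • (HamX g x ξ, HamXi g x ξ)) 0 hd hline
    refine (hcomp.unique (hfd.congr_of_eventuallyEq (.of_forall fun t => ?_))).trans_le hf'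
    simp only [Function.comp, hζ, zetaCut, angCut, betaF_eq, tauA, Prod.fst_add, Prod.snd_add,
      Prod.smul_fst, Prod.smul_snd]
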